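/- arXiv:1412.1748 — 4 statements merged into one kernel-verified Lean document; each statement's English description precedes it below -/
import Mathlib

section
/- For a set Γ, the Banach space ℓ₁(Γ) endowed with its weak topology σ(E,E′) is an ℵ-space if and only if the cardinality of Γ does not exceed the continuum 2^{ℵ₀}. -/
open TopologicalSpace Filter Set

/-- A family `N` of subsets of a topological space `X` is a *k-network* if whenever `K ⊆ U`
with `K` compact and `U` open, there is a finite subfamily `F ⊆ N` with `K ⊆ ⋃₀ F ⊆ U`. -/
def IsKNetwork {X : Type*} [TopologicalSpace X] (N : Set (Set X)) : Prop :=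
  ∀ K U : Set X, IsCompact K → IsOpen U → K ⊆ U →
    ∃ F : Set (Set X), F ⊆ N ∧ F.Finite ∧ K ⊆ ⋃₀ F ∧ ⋃₀ F ⊆ U

/-- A family `N` of subsets of `X` is a *network* if for every `x` and every open `U ∋ x`
there is `A ∈ N` with `x ∈ A ⊆ U`. -/
def IsNetwork {X : Type*} [TopologicalSpace X] (N : Set (Set X)) : Prop :=
  ∀ (x : X) (U : Set X), IsOpen U → x ∈ U → ∃ A ∈ N, x ∈ A ∧ A ⊆ U

/-- A family of subsets is *locally finite* if every point has a neighbourhood meeting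
only finitely many of its members. -/
def IsLocallyFiniteFamily {X : Type*} [TopologicalSpace X] (N : Set (Set X)) : Prop :=
  ∀ x : X, ∃ V ∈ nhds x, {A ∈ N | (A ∩ V).Nonempty}.Finite

/-- A family of subsets is *σ-locally finite* if it is a countable union of locally finite
families. -/
def IsSigmaLocallyFinite {X : Type*} [TopologicalSpace X] (N : Set (Set X)) : Prop :=
  ∃ f : ℕ → Set (Set X), (∀ n, IsLocallyFiniteFamily (f n)) ∧ N = ⋃ n, f n

/-- An *ℵ-space* is a regular Hausdorff space with a σ-locally finite k-network. -/
def IsAlephSpace (X : Type*) [TopologicalSpace X] : Prop :=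
  RegularSpace X ∧ T2Space X ∧ ∃ N : Set (Set X), IsSigmaLocallyFinite N ∧ IsKNetwork N

/-- An *ℵ₀-space* is a regular Hausdorff space with a countable k-network. -/
def IsAleph0Space (X : Type*) [TopologicalSpace X] : Prop :=
  RegularSpace X ∧ T2Space X ∧ ∃ N : Set (Set X), N.Countable ∧ IsKNetwork N

namespace EllOne

variable {Γ : Type}

/-- The Banach space `ℓ₁(Γ)`. -/
abbrev L1 (Γ : Type) := lp (fun _ : Γ => ℝ) 1

lemma summ (x : L1 Γ) : Summable fun a => |x a| := by
  simpa using x.2.summable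

lemma norm_eq (x : L1 Γ) : ‖x‖ = ∑' a, |x a| := by
  rw [lp.norm_eq_tsum_rpow (by simp)]
  simp

lemma mem_of_le (x : L1 Γ) (y : Γ → ℝ) (h : ∀ a, |y a| ≤ |x a|) : Memℓp y (1 : ENNReal) := by
  apply memℓp_gen
  simpa using Summable.of_nonneg_of_le (fun a => abs_nonneg _) h (summ x)

lemma abs_mul_le {f : Γ → ℝ} (hf : ∀ a, |f a| ≤ 1) (x : L1 Γ) (a : Γ) : |f a * x a| ≤ |x a| := by
  rw [abs_mul]
  exact mul_le_of_le_one_left (abs_nonneg _) (hf a)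

/-- Multiplication by a function bounded by one. -/
noncomputable def mulCLM (f : Γ → ℝ) (hf : ∀ a, |f a| ≤ 1) : L1 Γ →L[ℝ] L1 Γ :=
  LinearMap.mkContinuous
    { toFun := fun x => ⟨fun a => f a * x a, mem_of_le x _ (abs_mul_le hf x)⟩
      map_add' := by
        intro x y
        ext a
        exact mul_add _ _ _
      map_smul' := by
        intro c x
        ext a
        simp [mul_left_comm] }
    1 (by
      intro x
      rw [one_mul]
      exact lp.norm_mono one_ne_zero (fun a => abs_mul_le hf x a))

@[simp] lemma mulCLM_apply (f : Γ → ℝ) (hf : ∀ a, |f a| ≤ 1) (x : L1 Γ) (a : Γ) :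
    mulCLM f hf x a = f a * x a := rfl

lemma norm_mulCLM_le (f : Γ → ℝ) (hf : ∀ a, |f a| ≤ 1) (x : L1 Γ) : ‖mulCLM f hf x‖ ≤ ‖x‖ :=
  lp.norm_mono one_ne_zero (fun a => abs_mul_le hf x a)

/-- Pairing with a function bounded by one. -/
noncomputable def pair (f : Γ → ℝ) (hf : ∀ a, |f a| ≤ 1) : L1 Γ →L[ℝ] ℝ :=
  (lp.tsumCLM (α := Γ) (𝕜 := ℝ) (E := ℝ)).comp (mulCLM f hf)

lemma pair_apply (f : Γ → ℝ) (hf : ∀ a, |f a| ≤ 1) (x : L1 Γ) :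
    pair f hf x = ∑' a, f a * x a := rfl

lemma pair_le (f : Γ → ℝ) (hf : ∀ a, |f a| ≤ 1) (x : L1 Γ) : |pair f hf x| ≤ ‖x‖ :=
  (lp.norm_tsum_le (mulCLM f hf x)).trans (norm_mulCLM_le f hf x)

lemma summ_mul (f : Γ → ℝ) (hf : ∀ a, |f a| ≤ 1) (x : L1 Γ) : Summable fun a => f a * x a :=
  Summable.of_norm (Summable.of_nonneg_of_le (fun a => norm_nonneg _) (abs_mul_le hf x) (summ x))

/-- indicator function -/
noncomputable def ind (A : Set Γ) : Γ → ℝ := A.indicator 1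

lemma ind_mem {A : Set Γ} {a : Γ} (h : a ∈ A) : ind A a = 1 := by simp [ind, h]
lemma ind_not_mem {A : Set Γ} {a : Γ} (h : a ∉ A) : ind A a = 0 := by simp [ind, h]

lemma ind_le (A : Set Γ) (a : Γ) : |ind A a| ≤ 1 := by
  by_cases h : a ∈ A
  · simp [ind_mem h]
  · simp [ind_not_mem h]

/-- the sign of a boolean -/
def sg (b : Bool) : ℝ := if b then 1 else -1

lemma sg_le (b : Bool) : |sg b| ≤ 1 := by cases b <;> simp [sg]

/-- Schur property. -/
lemma schur (z : ℕ → L1 Γ)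
    (h : ∀ f hf, Tendsto (fun n => pair f hf (z n)) atTop (nhds 0)) :
    Tendsto z atTop (nhds 0) := by
  classical
  have hcoord : ∀ a, Tendsto (fun n => z n a) atTop (nhds 0) := by
    intro a
    refine (h (ind {a}) (ind_le _)).congr fun n => ?_
    rw [pair_apply, tsum_eq_single a]
    · rw [ind_mem (by simp), one_mul]
    · intro b hb
      rw [ind_not_mem (by simpa using hb), zero_mul]
  rw [tendsto_zero_iff_norm_tendsto_zero]
  rw [Metric.tendsto_atTop]
  intro ε hε
  let F : ℕ → Set (Γ → Bool) := fun m =>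
    ⋂ n ≥ m, {b | |pair (fun a => sg (b a)) (fun a => sg_le _) (z n)| ≤ ε / 2}
  have hcl : ∀ m, IsClosed (F m) := by
    intro m
    refine isClosed_iInter fun n => isClosed_iInter fun _ => ?_
    refine isClosed_le (continuous_abs.comp ?_) continuous_const
    simp only [pair_apply]
    refine continuous_tsum (u := fun a => |z n a|) ?_ (summ (z n)) ?_
    · intro a
      refine Continuous.mul ?_ continuous_const
      exact (continuous_of_discreteTopology (f := sg)).comp (continuous_apply a)
    · intro a b
      exact abs_mul_le (f := fun a => sg (b a)) (fun a => sg_le _) (z n) a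
  have hU : ⋃ m, F m = univ := by
    rw [eq_univ_iff_forall]
    intro b
    have := h (fun a => sg (b a)) (fun a => sg_le _)
    rw [Metric.tendsto_atTop] at this
    obtain ⟨m, hm⟩ := this (ε / 2) (by positivity)
    refine mem_iUnion.2 ⟨m, ?_⟩
    simp only [F, mem_iInter]
    intro n hn
    have := hm n hn
    rw [Real.dist_eq, sub_zero] at this
    exact this.le
  obtain ⟨m, b0, hb0⟩ := nonempty_interior_of_iUnion_of_closed hcl hU
  obtain ⟨S, u, hu, hsub⟩ := isOpen_pi_iff.1 isOpen_interior b0 hb0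
  have hS : Tendsto (fun n => ∑ a ∈ S, 2 * |z n a|) atTop (nhds 0) := by
    have : Tendsto (fun n => ∑ a ∈ S, 2 * |z n a|) atTop (nhds (∑ a ∈ S, 2 * |(0:ℝ)|)) :=
      tendsto_finsetSum _ fun a _ => ((hcoord a).abs).const_mul 2
    simpa using this
  rw [Metric.tendsto_atTop] at hS
  obtain ⟨m', hm'⟩ := hS (ε / 2) (by positivity)
  refine ⟨max m m', fun n hn => ?_⟩
  have h1 := hm' n (le_trans (le_max_right _ _) hn)
  rw [Real.dist_eq, sub_zero] at h1 ⊢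
  rw [abs_of_nonneg (norm_nonneg _)]
  have h1' := (le_abs_self _).trans_lt h1
  let b : Γ → Bool := fun a => if a ∈ S then b0 a else decide (0 ≤ z n a)
  have hb : b ∈ F m := by
    apply interior_subset
    apply hsub
    intro a ha
    have : b a = b0 a := if_pos ha
    rw [this]
    exact (hu a ha).2
  simp only [F, mem_iInter] at hb
  have h2 : |pair (fun a => sg (b a)) (fun a => sg_le _) (z n)| ≤ ε / 2 :=
    hb n (le_trans (le_max_left _ _) hn)
  have h3 : ‖z n‖ - pair (fun a => sg (b a)) (fun a => sg_le _) (z n) ≤ ∑ a ∈ S, 2 * |z n a| := by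
    rw [norm_eq, pair_apply, ← (summ (z n)).tsum_sub (summ_mul _ (fun a => sg_le _) (z n)),
      tsum_eq_sum (s := S)]
    · refine Finset.sum_le_sum fun a _ => ?_
      have := abs_mul_le (f := fun a => sg (b a)) (fun a => sg_le _) (z n) a
      have := neg_abs_le (sg (b a) * z n a)
      linarith
    · intro a ha
      have : b a = decide (0 ≤ z n a) := if_neg ha
      rw [this]
      by_cases h0 : 0 ≤ z n a
      · simp [h0, sg, abs_of_nonneg h0]
      · simp [h0, sg, abs_of_neg (not_le.1 h0)]
  have := (le_abs_self _).trans h2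
  linarith

lemma weak_cont (L : L1 Γ →L[ℝ] ℝ) :
    Continuous (fun w : WeakSpace ℝ (L1 Γ) => L ((toWeakSpace ℝ (L1 Γ)).symm w)) :=
  WeakBilin.eval_continuous (topDualPairing ℝ (L1 Γ)).flip L

lemma weak_t2 : T2Space (WeakSpace ℝ (L1 Γ)) := by
  refine ⟨fun x y hxy => ?_⟩
  have hne : (toWeakSpace ℝ (L1 Γ)).symm x ≠ (toWeakSpace ℝ (L1 Γ)).symm y := by
    simpa using hxy
  obtain ⟨L, hL⟩ := SeparatingDual.exists_separating_of_ne (R := ℝ) hne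
  exact separated_by_continuous (weak_cont L) hL

lemma compact_norm (K : Set (WeakSpace ℝ (L1 Γ))) (hK : IsCompact K) :
    IsCompact (toWeakSpace ℝ (L1 Γ) ⁻¹' K) := by
  have := weak_t2 (Γ := Γ)
  have hclosed : IsClosed (toWeakSpace ℝ (L1 Γ) ⁻¹' K) :=
    hK.isClosed.preimage (toWeakSpaceCLM ℝ (L1 Γ)).continuous
  apply IsSeqCompact.isCompact
  intro x hx
  let G : Set Γ := ⋃ n, Function.support (fun a => x n a)
  have hG : G.Countable := by
    refine countable_iUnion fun n => ?_
    have := (summ (x n)).countable_support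
    refine this.mono fun a ha => ?_
    simpa using ha
  have : Countable G := hG.to_subtype
  let π : WeakSpace ℝ (L1 Γ) → (G → ℝ) := fun w a => (toWeakSpace ℝ (L1 Γ)).symm w a
  have hcoord : ∀ a : Γ, Continuous
      (fun w : WeakSpace ℝ (L1 Γ) => (toWeakSpace ℝ (L1 Γ)).symm w a) :=
    fun a => weak_cont (lp.evalCLM ℝ (fun _ : Γ => ℝ) 1 a)
  have hπ : Continuous π := continuous_pi fun a => hcoord a
  obtain ⟨p, ⟨y0, hy0, rfl⟩, φ, hφ, hlim⟩ := (hK.image hπ).isSeqCompact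
    (x := fun n => π (toWeakSpace ℝ (L1 Γ) (x n))) (fun n => ⟨_, hx n, rfl⟩)
  rw [tendsto_pi_nhds] at hlim
  let y : L1 Γ := mulCLM (ind G) (ind_le G) ((toWeakSpace ℝ (L1 Γ)).symm y0)
  have hxG : ∀ n, ∀ a ∉ G, x n a = 0 := by
    intro n a ha
    by_contra hne
    exact ha (mem_iUnion.2 ⟨n, hne⟩)
  have hpair : ∀ f hf, Tendsto (fun n => pair f hf (x (φ n) - y)) atTop (nhds 0) := by
    intro f hf
    have hg : ∀ a, |f a * ind G a| ≤ 1 := by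
      intro a
      rw [abs_mul]
      exact mul_le_one₀ (hf a) (abs_nonneg _) (ind_le G a)
    have e1 : ∀ n, pair f hf (x n) = pair _ hg (x n) := by
      intro n
      rw [pair_apply, pair_apply]
      congr 1
      ext a
      by_cases ha : a ∈ G
      · rw [ind_mem ha, mul_one]
      · rw [hxG n a ha, mul_zero, mul_zero]
    have key : Tendsto (fun n => pair f hf (x (φ n))) atTop (nhds (pair f hf y)) := by
      rw [tendsto_iff_ultrafilter]
      intro U hU
      obtain ⟨w, hwK, hw⟩ := hK.ultrafilter_le_nhds
        (U.map (fun n => toWeakSpace ℝ (L1 Γ) (x (φ n)))) (by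
          rw [le_principal_iff, Ultrafilter.coe_map, Filter.mem_map]
          exact Filter.mem_of_superset (Filter.univ_mem (f := (U : Filter ℕ))) (fun n _ => hx (φ n)))
      have hw' : Tendsto (fun n => toWeakSpace ℝ (L1 Γ) (x (φ n))) U (nhds w) := hw
      have hwy : ∀ a ∈ G, (toWeakSpace ℝ (L1 Γ)).symm w a = (toWeakSpace ℝ (L1 Γ)).symm y0 a := by
        intro a ha
        have t1 := ((hcoord a).tendsto w).comp hw'
        have t2 := (hlim ⟨a, ha⟩).mono_left hU
        exact tendsto_nhds_unique t1 t2
      have t3 := ((weak_cont (pair _ hg)).tendsto w).comp hw'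
      have e2 : pair _ hg ((toWeakSpace ℝ (L1 Γ)).symm w) = pair f hf y := by
        rw [pair_apply, pair_apply]
        congr 1
        ext a
        simp only [y, mulCLM_apply]
        by_cases ha : a ∈ G
        · rw [hwy a ha, mul_assoc]
        · rw [ind_not_mem ha]; ring
      rw [e2] at t3
      refine Tendsto.congr (fun n => ?_) t3
      simp [e1]
    have := key.sub_const (pair f hf y)
    simpa using this
  have hconv : Tendsto (fun n => x (φ n)) atTop (nhds y) := by
    have := schur _ hpair
    exact tendsto_sub_nhds_zero_iff.1 this
  exact ⟨y, hclosed.mem_of_tendsto hconv (Eventually.of_forall fun n => hx (φ n)), φ, hφ, hconv⟩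

end EllOne

namespace EllOne

variable {Γ : Type}

open Classical in
/-- The unit vector. -/
noncomputable def e (a : Γ) : L1 Γ := lp.single 1 a 1

lemma e_self (a : Γ) : e a a = 1 := by
  simp [e]

lemma e_ne {a b : Γ} (h : b ≠ a) : e a b = 0 := by
  simp [e, h]

lemma hasSum_e (x : L1 Γ) : HasSum (fun a => x a • e a) x := by
  classical
  have := lp.hasSum_single (p := 1) (by simp) x
  convert this using 2 with a
  ext b
  by_cases h : b = a
  · subst h
    simp [e]
  · simp [e, h]

/-- Basic sets of the network. -/
def Nset {n : ℕ} (q : Fin n → ℝ) (A : Fin n → Set Γ) (δ ε : ℝ) (c : Fin n → Γ) : Set (L1 Γ) :=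
  {y | ‖y - ∑ i, q i • e (c i)‖ < ε ∧
    ∀ i, ‖mulCLM (ind (A i)) (ind_le _) (y - q i • e (c i))‖ < δ}

lemma isOpen_Nset {n : ℕ} (q : Fin n → ℝ) (A : Fin n → Set Γ) (δ ε : ℝ) (c : Fin n → Γ) :
    IsOpen (Nset q A δ ε c) := by
  have : Nset q A δ ε c = {y | ‖y - ∑ i, q i • e (c i)‖ < ε} ∩
    ⋂ i, {y | ‖mulCLM (ind (A i)) (ind_le _) (y - q i • e (c i))‖ < δ} := by
    ext y
    simp [Nset]
  rw [this]
  refine IsOpen.inter (isOpen_lt (by fun_prop) continuous_const) ?_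
  exact isOpen_iInter_of_finite fun i => isOpen_lt (by fun_prop) continuous_const

lemma local_one (q δ : ℝ) (A : Set Γ) (hδ : 0 < δ) (hq : 3 * δ < |q|) (z : L1 Γ) :
    ∃ V ∈ nhds (toWeakSpace ℝ (L1 Γ) z), ∃ F : Set Γ, F.Finite ∧ ∀ y : L1 Γ, ∀ c ∈ A,
      toWeakSpace ℝ (L1 Γ) y ∈ V → ‖mulCLM (ind A) (ind_le _) (y - q • e c)‖ < δ → c ∈ F := by
  classical
  by_cases hz : |pair (ind A) (ind_le A) z| < 2 * δ
  · refine ⟨{w | |pair (ind A) (ind_le A) ((toWeakSpace ℝ (L1 Γ)).symm w)| < 2 * δ}, ?_, ∅,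
      Set.finite_empty, ?_⟩
    · refine IsOpen.mem_nhds (isOpen_lt (continuous_abs.comp (weak_cont _)) continuous_const) ?_
      simpa using hz
    · intro y c hc hy hN
      exfalso
      have hy' : |pair (ind A) (ind_le A) y| < 2 * δ := by simpa using hy
      have h1 : |pair (ind A) (ind_le A) (y - q • e c)| < δ :=
        (lp.norm_tsum_le (mulCLM (ind A) (ind_le A) (y - q • e c))).trans_lt hN
      have h2 : pair (ind A) (ind_le A) (e c) = 1 := by
        rw [pair_apply, tsum_eq_single c]
        · rw [ind_mem hc, e_self, one_mul]
        · intro b hb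
          rw [e_ne hb, mul_zero]
      rw [map_sub, map_smul, h2, smul_eq_mul, mul_one] at h1
      have h3 := abs_sub_abs_le_abs_sub q (pair (ind A) (ind_le A) y)
      rw [abs_sub_comm] at h3
      linarith
  · have hsum : HasSum (fun a => ind A a * z a) (pair (ind A) (ind_le A) z) :=
      (summ_mul _ (ind_le A) z).hasSum
    have hlt : δ < |pair (ind A) (ind_le A) z| := by linarith
    obtain ⟨F, hF⟩ := ((Filter.Tendsto.abs hsum).eventually (lt_mem_nhds hlt)).exists
    have hAF : ∀ x : L1 Γ, pair (ind (A ∩ F)) (ind_le _) x = ∑ a ∈ F, ind A a * x a := by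
      intro x
      rw [pair_apply, tsum_eq_sum (s := F)]
      · refine Finset.sum_congr rfl fun a ha => ?_
        by_cases hA : a ∈ A
        · rw [ind_mem hA, ind_mem (A := A ∩ F) (mem_inter hA ha)]
        · rw [ind_not_mem hA, ind_not_mem (fun h => hA h.1)]
      · intro a ha
        rw [ind_not_mem (fun h => ha h.2), zero_mul]
    refine ⟨{w | δ < |pair (ind (A ∩ F)) (ind_le _) ((toWeakSpace ℝ (L1 Γ)).symm w)|}, ?_, F,
      F.finite_toSet, ?_⟩
    · refine IsOpen.mem_nhds (isOpen_lt continuous_const (continuous_abs.comp (weak_cont _))) ?_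
      simpa [hAF] using hF
    · intro y c hc hy hN
      have hy' : δ < |pair (ind (A ∩ F)) (ind_le _) y| := by simpa using hy
      by_contra hcF
      have h1 := pair_le (ind (F : Set Γ)) (ind_le _) (mulCLM (ind A) (ind_le _) (y - q • e c))
      have h2 : pair (ind (F : Set Γ)) (ind_le _) (mulCLM (ind A) (ind_le _) (y - q • e c)) =
          pair (ind (A ∩ F)) (ind_le _) y := by
        rw [pair_apply, pair_apply]
        congr 1
        ext a
        by_cases haF : a ∈ (F : Set Γ)
        · have hac : a ≠ c := fun h => hcF (h ▸ haF)
          have : (y - q • e c) a = y a := by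
            have h : (y - q • e c) a = y a - q * e c a := rfl
            rw [h, e_ne hac, mul_zero, sub_zero]
          rw [mulCLM_apply, this, ind_mem haF, one_mul]
          by_cases hA : a ∈ A
          · rw [ind_mem hA, ind_mem (A := A ∩ F) (mem_inter hA haF)]
          · rw [ind_not_mem hA, ind_not_mem (fun h => hA h.1)]
        · rw [ind_not_mem haF, ind_not_mem (fun h => haF h.2), zero_mul, zero_mul]
      rw [h2] at h1
      linarith

lemma local_fin {n : ℕ} (q : Fin n → ℝ) (A : Fin n → Set Γ) (δ ε : ℝ) (hδ : 0 < δ)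
    (hq : ∀ i, 3 * δ < |q i|) :
    IsLocallyFiniteFamily (X := WeakSpace ℝ (L1 Γ))
      ((fun c => (toWeakSpace ℝ (L1 Γ)).symm ⁻¹' (Nset q A δ ε c)) '' {c | ∀ i, c i ∈ A i}) := by
  intro z
  choose V hV F hF h using fun i =>
    local_one (q i) δ (A i) hδ (hq i) ((toWeakSpace ℝ (L1 Γ)).symm z)
  refine ⟨⋂ i, V i, ?_, ?_⟩
  · rw [Filter.iInter_mem]
    intro i
    simpa using hV i
  · refine ((Set.Finite.pi' hF).image
      (fun c => (toWeakSpace ℝ (L1 Γ)).symm ⁻¹' (Nset q A δ ε c))).subset ?_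
    rintro _ ⟨⟨c, hc, rfl⟩, w, hw, hwV⟩
    refine ⟨c, fun i => ?_, rfl⟩
    exact h i ((toWeakSpace ℝ (L1 Γ)).symm w) (c i) (hc i)
      (by simpa using mem_iInter.1 hwV i) (hw.2 i)

lemma exists_basis (g : Γ → ℝ) (hg : Function.Injective g) (w : L1 Γ) (c : Γ) (hw : w c = 0)
    (δ : ℝ) (hδ : 0 < δ) :
    ∃ B ∈ countableBasis ℝ, g c ∈ B ∧ ‖mulCLM (ind (g ⁻¹' B)) (ind_le _) w‖ < δ := by
  classical
  obtain ⟨S, hS⟩ := ((hasSum_e w).eventually (Metric.ball_mem_nhds w hδ)).exists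
  let T : Set ℝ := g '' ((S.erase c : Finset Γ) : Set Γ)
  have hT : IsOpen Tᶜ := ((S.erase c).finite_toSet.image g).isClosed.isOpen_compl
  have hcT : g c ∈ Tᶜ := by
    rintro ⟨a, ha, hac⟩
    have := hg hac
    subst this
    simp at ha
  obtain ⟨B, hB, hcB, hBT⟩ := (isBasis_countableBasis ℝ).exists_subset_of_mem_open hcT hT
  refine ⟨B, hB, hcB, ?_⟩
  have h0 : mulCLM (ind (g ⁻¹' B)) (ind_le _) (∑ a ∈ S, w a • e a) = 0 := by
    rw [map_sum]
    refine Finset.sum_eq_zero fun a ha => ?_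
    rw [map_smul]
    by_cases hac : a = c
    · rw [hac, hw, zero_smul]
    · have : mulCLM (ind (g ⁻¹' B)) (ind_le _) (e a) = 0 := by
        ext b
        rw [mulCLM_apply]
        by_cases hba : b = a
        · subst hba
          rw [ind_not_mem, zero_mul]
          · rfl
          · intro hb
            exact hBT hb ⟨b, by simp [ha, hac], rfl⟩
        · rw [e_ne hba, mul_zero]
          rfl
      rw [this, smul_zero]
  have h1 : mulCLM (ind (g ⁻¹' B)) (ind_le _) w =
      mulCLM (ind (g ⁻¹' B)) (ind_le _) (w - ∑ a ∈ S, w a • e a) := by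
    rw [map_sub, h0, sub_zero]
  rw [h1]
  refine (norm_mulCLM_le _ _ _).trans_lt ?_
  rw [← dist_eq_norm, dist_comm]
  exact hS

/-- Index type. -/
abbrev Idx := Σ n : ℕ, (Fin n → ℚ) × (Fin n → countableBasis ℝ) × ℚ × ℚ

/-- Validity. -/
def valid (i : Idx) : Prop := (0:ℝ) < i.2.2.2.1 ∧ ∀ k, 3 * (i.2.2.2.1 : ℝ) < |(i.2.1 k : ℝ)|

/-- The member of the family. -/
def mem (g : Γ → ℝ) (i : Idx) (c : Fin i.1 → Γ) : Set (L1 Γ) :=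
  Nset (fun k => (i.2.1 k : ℝ)) (fun k => g ⁻¹' (i.2.2.1 k : Set ℝ)) i.2.2.2.1 i.2.2.2.2 c

lemma sub_coord (z : L1 Γ) (a : Γ) : (z - z a • e a) a = 0 := by
  have : (z - z a • e a) a = z a - z a * e a a := rfl
  rw [this, e_self, mul_one, sub_self]

lemma exists_mem (g : Γ → ℝ) (hg : Function.Injective g) (z : L1 Γ) (r : ℝ) (hr : 0 < r) :
    ∃ (i : Idx) (c : Fin i.1 → Γ), valid i ∧ (∀ k, g (c k) ∈ (i.2.2.1 k : Set ℝ)) ∧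
      z ∈ mem g i c ∧ mem g i c ⊆ Metric.ball z r := by
  classical
  obtain ⟨ε, hε0, hεr⟩ := exists_rat_btwn (half_pos hr)
  obtain ⟨S0, hS0⟩ := ((hasSum_e z).eventually (Metric.ball_mem_nhds z hε0)).exists
  let S := S0.filter (fun a => z a ≠ 0)
  have hS : ‖z - ∑ a ∈ S, z a • e a‖ < ε := by
    have : ∑ a ∈ S, z a • e a = ∑ a ∈ S0, z a • e a := by
      refine Finset.sum_filter_of_ne ?_
      intro a _ h h0
      exact h (by rw [h0, zero_smul])
    rw [this, ← dist_eq_norm, dist_comm]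
    exact hS0
  let n := S.card
  let c : Fin n → Γ := fun k => (S.equivFin.symm k : Γ)
  have hc0 : ∀ k, z (c k) ≠ 0 := fun k => (Finset.mem_filter.1 (S.equivFin.symm k).2).2
  have hsum : ∑ k, z (c k) • e (c k) = ∑ a ∈ S, z a • e a := by
    rw [← Finset.sum_coe_sort S]
    exact Equiv.sum_comp S.equivFin.symm (fun a : S => z a • e (a : Γ))
  obtain ⟨δ', hδ'0, hδ'⟩ : ∃ δ' : ℝ, 0 < δ' ∧ ∀ k, 3 * δ' < |z (c k)| := by
    have : ∀ᶠ d : ℝ in nhdsWithin 0 (Ioi 0), ∀ k, 3 * d < |z (c k)| := by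
      rw [eventually_all]
      intro k
      refine Filter.Eventually.filter_mono nhdsWithin_le_nhds ?_
      refine (continuous_const.mul continuous_id).continuousAt.eventually_lt
        continuousAt_const ?_
      simpa using hc0 k
    obtain ⟨d, hd, hd0⟩ := (this.and self_mem_nhdsWithin).exists
    exact ⟨d, hd0, hd⟩
  obtain ⟨δ, hδ0, hδδ'⟩ := exists_rat_btwn hδ'0
  have hδ : ∀ k, 3 * (δ : ℝ) < |z (c k)| := fun k => by linarith [hδ' k]
  choose B hB hcB hBδ using fun k => exists_basis g hg (z - z (c k) • e (c k)) (c k)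
    (sub_coord z (c k)) δ hδ0
  let O : Set (Fin n → ℝ) := {q | ‖z - ∑ k, q k • e (c k)‖ < ε} ∩
    ⋂ k, ({q | ‖mulCLM (ind (g ⁻¹' B k)) (ind_le _) (z - q k • e (c k))‖ < δ} ∩
      {q | 3 * (δ : ℝ) < |q k|})
  have hO : IsOpen O := by
    refine IsOpen.inter (isOpen_lt (by fun_prop) continuous_const) ?_
    refine isOpen_iInter_of_finite fun k => IsOpen.inter ?_ ?_
    · exact isOpen_lt (by fun_prop) continuous_const
    · exact isOpen_lt continuous_const (by fun_prop)
  have hOz : (fun k => z (c k)) ∈ O := by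
    refine ⟨?_, mem_iInter.2 fun k => ⟨hBδ k, hδ k⟩⟩
    rw [mem_ofPred_eq, hsum]
    exact hS
  have hd : DenseRange (Pi.map (fun (_ : Fin n) => ((↑) : ℚ → ℝ))) :=
    DenseRange.piMap fun _ => Rat.denseRange_cast
  obtain ⟨q, hq1, hq2⟩ := hd.exists_mem_open hO ⟨_, hOz⟩
  simp only [mem_iInter] at hq2
  refine ⟨⟨n, q, fun k => ⟨B k, hB k⟩, δ, ε⟩, c, ⟨hδ0, fun k => (hq2 k).2⟩, hcB,
    ⟨hq1, fun k => (hq2 k).1⟩, ?_⟩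
  rintro y ⟨hy, -⟩
  have hy' : ‖y - ∑ k, (q k : ℝ) • e (c k)‖ < ε := hy
  have hq1' : ‖z - ∑ k, (q k : ℝ) • e (c k)‖ < ε := hq1
  rw [← dist_eq_norm] at hy' hq1'
  rw [Metric.mem_ball]
  have := dist_triangle_right y z (∑ k, (q k : ℝ) • e (c k))
  linarith

/-- The family for an index. -/
def fam (g : Γ → ℝ) (i : Idx) : Set (Set (WeakSpace ℝ (L1 Γ))) :=
  {s | valid i ∧ s ∈ (fun c => (toWeakSpace ℝ (L1 Γ)).symm ⁻¹' (mem g i c)) ''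
    {c | ∀ k, g (c k) ∈ (i.2.2.1 k : Set ℝ)}}

lemma fam_local (g : Γ → ℝ) (i : Idx) : IsLocallyFiniteFamily (fam g i) := by
  by_cases hv : valid i
  · have := local_fin (Γ := Γ) (fun k => (i.2.1 k : ℝ))
      (fun k => g ⁻¹' (i.2.2.1 k : Set ℝ)) i.2.2.2.1 i.2.2.2.2 hv.1 hv.2
    intro x
    obtain ⟨V, hV, hfin⟩ := this x
    exact ⟨V, hV, hfin.subset fun s hs => ⟨hs.1.2, hs.2⟩⟩
  · intro x
    refine ⟨univ, Filter.univ_mem, ?_⟩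
    convert Set.finite_empty
    ext s
    simp [fam, hv]

lemma aleph_of_card (h : Cardinal.mk Γ ≤ Cardinal.continuum) :
    IsAlephSpace (WeakSpace ℝ (L1 Γ)) := by
  rw [← Cardinal.mk_real] at h
  obtain ⟨⟨g, hg⟩⟩ := (Cardinal.le_def _ _).1 h
  have : Nonempty Idx := ⟨⟨0, Fin.elim0, Fin.elim0, 0, 0⟩⟩
  obtain ⟨enum, henum⟩ := exists_surjective_nat Idx
  refine ⟨inferInstance, weak_t2, ⋃ m, fam g (enum m), ⟨_, fun m => fam_local g _, rfl⟩, ?_⟩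
  intro K U hK hU hKU
  have hK' := compact_norm K hK
  have hU' : IsOpen (toWeakSpace ℝ (L1 Γ) ⁻¹' U) :=
    hU.preimage (toWeakSpaceCLM ℝ (L1 Γ)).continuous
  have hex : ∀ z : (toWeakSpace ℝ (L1 Γ) ⁻¹' K), ∃ (i : Idx) (c : Fin i.1 → Γ), valid i ∧
      (∀ k, g (c k) ∈ (i.2.2.1 k : Set ℝ)) ∧
      (z : L1 Γ) ∈ mem g i c ∧ mem g i c ⊆ toWeakSpace ℝ (L1 Γ) ⁻¹' U := by
    rintro ⟨z, hz⟩
    obtain ⟨r, hr, hrU⟩ := Metric.isOpen_iff.1 hU' z (hKU hz)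
    obtain ⟨i, c, h1, h2, h3, h4⟩ := exists_mem g hg z r hr
    exact ⟨i, c, h1, h2, h3, h4.trans hrU⟩
  choose i c h1 h2 h3 h4 using hex
  obtain ⟨t, ht⟩ := hK'.elim_finite_subcover (fun z => mem g (i z) (c z))
    (fun z => isOpen_Nset _ _ _ _ _) (fun z hz => mem_iUnion.2 ⟨⟨z, hz⟩, h3 _⟩)
  refine ⟨(fun z => (toWeakSpace ℝ (L1 Γ)).symm ⁻¹' (mem g (i z) (c z))) '' t, ?_,
    t.finite_toSet.image _, ?_, ?_⟩
  · rintro _ ⟨z, _, rfl⟩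
    obtain ⟨m, hm⟩ := henum (i z)
    refine mem_iUnion.2 ⟨m, ?_⟩
    rw [hm]
    exact ⟨h1 z, c z, h2 z, rfl⟩
  · intro w hw
    have hw' : (toWeakSpace ℝ (L1 Γ)).symm w ∈ toWeakSpace ℝ (L1 Γ) ⁻¹' K := by simpa using hw
    have := ht hw'
    simp only [mem_iUnion] at this
    obtain ⟨z, hz, hzw⟩ := this
    exact ⟨_, ⟨z, hz, rfl⟩, hzw⟩
  · rintro w ⟨_, ⟨z, _, rfl⟩, hw⟩
    exact h4 z hw

lemma weak_nhds (U : Set (WeakSpace ℝ (L1 Γ))) (hU : IsOpen U) (h0 : 0 ∈ U) :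
    ∃ T : Finset (L1 Γ →L[ℝ] ℝ), ∀ x : L1 Γ, (∀ L ∈ T, L x = 0) → toWeakSpace ℝ (L1 Γ) x ∈ U := by
  obtain ⟨O, hO, rfl⟩ := isOpen_induced_iff.1 hU
  obtain ⟨T, u, hu, hsub⟩ := isOpen_pi_iff.1 hO _ h0
  refine ⟨T, fun x hx => hsub ?_⟩
  intro L hL
  have h1 := (hu L hL).2
  have h2 : L (0 : L1 Γ) ∈ u L := h1
  have h3 : L x ∈ u L := by
    rw [hx L hL]
    rwa [map_zero] at h2
  exact h3

lemma gdelta {X : Type*} [TopologicalSpace X] (h : IsAlephSpace X) (x : X) :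
    ∃ U : ℕ → Set X, (∀ n, IsOpen (U n) ∧ x ∈ U n) ∧ ∀ y, (∀ n, y ∈ U n) → y = x := by
  obtain ⟨_, _, N, ⟨f, hf, rfl⟩, hN⟩ := h
  have hlf : ∀ n, LocallyFinite (fun s : f n => closure (s : Set X)) := by
    intro n
    have : LocallyFinite (fun s : f n => (s : Set X)) := by
      intro y
      obtain ⟨V, hV, hfin⟩ := hf n y
      refine ⟨V, hV, ?_⟩
      refine Set.Finite.of_finite_image (f := Subtype.val) (hfin.subset ?_)
        Subtype.val_injective.injOn
      rintro _ ⟨s, hs, rfl⟩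
      exact ⟨s.2, hs⟩
    exact this.closure
  refine ⟨fun n => (⋃ s : {s : f n // x ∉ closure (s : Set X)}, closure (s.1 : Set X))ᶜ, ?_, ?_⟩
  · intro n
    refine ⟨?_, ?_⟩
    · rw [isOpen_compl_iff]
      exact ((hlf n).comp_injective Subtype.val_injective).isClosed_iUnion
        (fun s => isClosed_closure)
    · simp
  · intro y hy
    by_contra hne
    obtain ⟨V, hV, hVx⟩ : ∃ V ∈ nhds y, x ∉ closure V := by
      obtain ⟨u, v, hu, hv, hyu, hxv, hd⟩ := t2_separation hne
      refine ⟨u, hu.mem_nhds hyu, fun hx => ?_⟩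
      obtain ⟨p, hp1, hp2⟩ := mem_closure_iff.1 hx v hv hxv
      exact hd.le_bot ⟨hp2, hp1⟩
    obtain ⟨W, hWV, hW, hyW⟩ := mem_nhds_iff.1 hV
    obtain ⟨F, hFN, _, hyF, hFW⟩ := hN {y} W isCompact_singleton hW (by simpa using hyW)
    obtain ⟨s, hs, hys⟩ := hyF rfl
    obtain ⟨n, hn⟩ := mem_iUnion.1 (hFN hs)
    have hxs : x ∉ closure s := fun hx =>
      hVx (closure_mono ((subset_sUnion_of_mem hs).trans (hFW.trans hWV)) hx)
    exact hy n (mem_iUnion.2 ⟨⟨⟨s, hn⟩, hxs⟩, subset_closure hys⟩)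

lemma card_of_aleph (h : IsAlephSpace (WeakSpace ℝ (L1 Γ))) :
    Cardinal.mk Γ ≤ Cardinal.continuum := by
  obtain ⟨U, hU, hU0⟩ := gdelta h 0
  choose T hT using fun n => weak_nhds (U n) (hU n).1 (hU n).2
  let T' : ℕ → Set (L1 Γ →L[ℝ] ℝ) := fun n => (T n : Set (L1 Γ →L[ℝ] ℝ))
  have hcount : (⋃ n, T' n).Countable := countable_iUnion fun n => (T n).countable_toSet
  have hinj : Function.Injective
      (fun (a : Γ) (L : (⋃ n, T' n : Set (L1 Γ →L[ℝ] ℝ))) => L.1 (e a)) := by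
    intro a b hab
    have h1 : toWeakSpace ℝ (L1 Γ) (e a - e b) = 0 := by
      apply hU0
      intro n
      apply hT
      intro L hL
      have := congrFun hab ⟨L, mem_iUnion.2 ⟨n, hL⟩⟩
      rw [map_sub, sub_eq_zero]
      exact this
    have h2 : e a = e b := by
      rw [← sub_eq_zero]
      exact h1
    by_contra hne
    have := e_self a
    rw [h2, e_ne hne] at this
    exact zero_ne_one this
  have := Cardinal.mk_le_of_injective hinj
  refine this.trans ?_
  have hc := hcount.to_subtype
  rw [Cardinal.mk_arrow, Cardinal.mk_real, Cardinal.lift_id, Cardinal.lift_id]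
  calc _ ≤ Cardinal.continuum ^ Cardinal.aleph0 :=
        Cardinal.power_le_power_left Cardinal.continuum_ne_zero (Cardinal.mk_le_aleph0)
    _ = _ := Cardinal.continuum_power_aleph0

end EllOne

/-- The Banach space `ℓ₁(Γ)` with its weak topology is an ℵ-space iff `|Γ| ≤ 𝔠`. -/
theorem ellOne_weakAleph_iff_card_le_continuum (Γ : Type) :
    IsAlephSpace (WeakSpace ℝ (lp (fun _ : Γ => ℝ) 1)) ↔
      Cardinal.mk Γ ≤ Cardinal.continuum := by
  exact ⟨EllOne.card_of_aleph, EllOne.aleph_of_card⟩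
end

section
/- The Banach space ℓ₁(ℝ) (i.e., ℓ₁(Γ) with index set Γ = ℝ) endowed with its weak topology σ(E,E′) is not a normal topological space. -/
open TopologicalSpace Filter Set

open scoped Topology

theorem corson_aux {X ι : Type*} [TopologicalSpace X] (φ : X → ι → ℝ) (hφ : Topology.IsInducing φ)
    (hs : ∀ s : Set ι, s.Finite → ∀ v : ι → ℝ, ∃ x, ∀ i ∈ s, φ x i = v i)
    (U V : Set X) (hU : IsOpen U) (hV : IsOpen V) (hd : Disjoint U V) :
    ∃ J : Set ι, J.Countable ∧ ∀ (a : ℕ → X) (b : X), (∀ n, a n ∈ U) → b ∈ V →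
      ¬ ∀ j ∈ J, Tendsto (fun n => φ (a n) j) atTop (𝓝 (φ b j)) := by
  classical
  have key : ∀ W : Set X, IsOpen W → ∀ p ∈ W, ∃ (I : Finset ι) (u : ι → Set ℝ),
      (∀ i ∈ I, IsOpen (u i) ∧ φ p i ∈ u i) ∧ ∀ y, (∀ i ∈ I, φ y i ∈ u i) → y ∈ W := by
    intro W hW p hp
    obtain ⟨O, hO, rfl⟩ := hφ.isOpen_iff.1 hW
    obtain ⟨I, u, h1, h2⟩ := isOpen_pi_iff.1 hO (φ p) hp
    exact ⟨I, u, h1, fun y hy => h2 (fun i hi => hy i hi)⟩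
  have hG : ∀ p, ∃ G : Finset ι, p ∈ U → ∀ y, (∀ i ∈ G, φ y i = φ p i) → y ∈ U := by
    intro p
    by_cases hp : p ∈ U
    · obtain ⟨I, u, h1, h2⟩ := key U hU p hp
      exact ⟨I, fun _ y hy => h2 y fun i hi => by rw [hy i hi]; exact (h1 i hi).2⟩
    · exact ⟨∅, fun h => absurd h hp⟩
  choose G hG using hG
  obtain ⟨x₀, -⟩ := hs ∅ finite_empty (fun _ => 0)
  have : Nonempty X := ⟨x₀⟩
  have hQ : ∀ J : Set ι, ∃ Q : Set X, J.Countable → Q.Countable ∧ Q ⊆ U ∧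
      ∀ a ∈ U, (fun j : J => φ a j) ∈ closure ((fun x => fun j : J => φ x j) '' Q) := by
    intro J
    by_cases hJ : J.Countable
    · have := hJ.to_subtype
      obtain ⟨t, ht1, ht2, ht3⟩ := (IsSeparable.of_separableSpace
        ((fun x => fun j : J => φ x j) '' U)).exists_countable_dense_subset
      obtain ⟨Q, hQU, hQc, hQt⟩ : ∃ Q ⊆ U, Q.Countable ∧ (fun x => fun j : J => φ x j) '' Q = t := by
        choose! g hg using ht1
        refine ⟨g '' t, ?_, ht2.image g, ?_⟩
        · rintro _ ⟨x, hx, rfl⟩; exact (hg hx).1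
        · rw [image_image]
          exact (image_congr fun x hx => (hg hx).2).trans (image_id' t)
      refine ⟨Q, fun _ => ⟨hQc, hQU, fun a ha => ?_⟩⟩
      rw [hQt]
      exact ht3 ⟨a, ha, rfl⟩
    · exact ⟨∅, fun h => absurd h hJ⟩
  choose Q hQ using hQ
  let step : Set ι → Set ι := fun J => J ∪ ⋃ p ∈ Q J, (G p : Set ι)
  let Jn : ℕ → Set ι := fun n => step^[n] ∅
  have hsucc : ∀ n, Jn (n + 1) = Jn n ∪ ⋃ p ∈ Q (Jn n), (G p : Set ι) := by
    intro n
    simp only [Jn, Function.iterate_succ_apply']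
    rfl
  have hc : ∀ n, (Jn n).Countable := by
    intro n
    induction n with
    | zero => exact countable_empty
    | succ n ih =>
      rw [hsucc]
      exact ih.union ((hQ _ ih).1.biUnion fun p _ => (G p).countable_toSet)
  have hmono : Monotone Jn := monotone_nat_of_le_succ fun n => by
    rw [hsucc]; exact subset_union_left
  refine ⟨⋃ n, Jn n, countable_iUnion hc, ?_⟩
  intro a b ha hb hab
  obtain ⟨I, u, h1, h2⟩ := key V hV b hb
  have hN : ∀ i, ∃ n, i ∈ (⋃ n, Jn n) → i ∈ Jn n := by
    intro i
    by_cases hi : i ∈ ⋃ n, Jn n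
    · obtain ⟨n, hn⟩ := mem_iUnion.1 hi
      exact ⟨n, fun _ => hn⟩
    · exact ⟨0, fun h => absurd h hi⟩
  choose N hN using hN
  let n := I.sup N
  have hn : ∀ i ∈ I, i ∈ (⋃ n, Jn n) → i ∈ Jn n := fun i hi h =>
    hmono (Finset.le_sup hi) (hN i h)
  have hev : ∀ᶠ k in atTop, ∀ i ∈ I, i ∈ (⋃ n, Jn n) → φ (a k) i ∈ u i := by
    rw [Finset.eventually_all]
    intro i hi
    by_cases hiJ : i ∈ ⋃ n, Jn n
    · filter_upwards [(hab i hiJ).eventually ((h1 i hi).1.mem_nhds (h1 i hi).2)] with k hk _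
      exact hk
    · exact Eventually.of_forall fun k h => absurd h hiJ
  obtain ⟨k, hk⟩ := hev.exists
  have hcl := (hQ (Jn n) (hc n)).2.2 (a k) (ha k)
  let O : Set (Jn n → ℝ) := ⋂ i ∈ I, {y | ∀ h : i ∈ Jn n, y ⟨i, h⟩ ∈ u i}
  have hO : IsOpen O := by
    refine isOpen_biInter_finset fun i hi => ?_
    by_cases h : i ∈ Jn n
    · have : {y : Jn n → ℝ | ∀ h : i ∈ Jn n, y ⟨i, h⟩ ∈ u i} = {y | y ⟨i, h⟩ ∈ u i} := by
        ext y; exact ⟨fun H => H h, fun H _ => H⟩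
      rw [this]
      exact (h1 i hi).1.preimage (continuous_apply (⟨i, h⟩ : Jn n))
    · have : {y : Jn n → ℝ | ∀ h : i ∈ Jn n, y ⟨i, h⟩ ∈ u i} = univ := by
        ext y; exact ⟨fun H => trivial, fun H h' => absurd h' h⟩
      rw [this]; exact isOpen_univ
  have haO : (fun j : Jn n => φ (a k) j) ∈ O :=
    mem_iInter₂.2 fun i hi h => hk i hi (mem_iUnion.2 ⟨n, h⟩)
  obtain ⟨_, hpO, p, hpQ, rfl⟩ := mem_closure_iff.1 hcl O hO haO
  have hpU : p ∈ U := (hQ (Jn n) (hc n)).2.1 hpQ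
  obtain ⟨x, hx⟩ := hs ((I : Set ι) ∪ G p) (I.finite_toSet.union (G p).finite_toSet)
    (fun i => if i ∈ ⋃ n, Jn n then φ p i else φ b i)
  have hxV : x ∈ V := by
    refine h2 x fun i hi => ?_
    rw [hx i (Or.inl hi)]
    split_ifs with h
    · exact mem_iInter₂.1 hpO i hi (hn i hi h)
    · exact (h1 i hi).2
  have hxU : x ∈ U := by
    refine hG p hpU x fun i hi => ?_
    rw [hx i (Or.inr hi), if_pos]
    refine mem_iUnion.2 ⟨n + 1, ?_⟩
    rw [hsucc]
    exact Or.inr (mem_iUnion₂.2 ⟨p, hpQ, hi⟩)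
  exact (disjoint_left.1 hd) hxU hxV

theorem weak_corson {E : Type*} [NormedAddCommGroup E] [NormedSpace ℝ E]
    (U V : Set (WeakSpace ℝ E)) (hU : IsOpen U) (hV : IsOpen V) (hd : Disjoint U V) :
    ∃ J : Set (StrongDual ℝ E), J.Countable ∧ ∀ (a : ℕ → E) (b : E),
      (∀ n, toWeakSpace ℝ E (a n) ∈ U) → toWeakSpace ℝ E b ∈ V →
      ¬ ∀ j ∈ J, Tendsto (fun n => j (a n)) atTop (𝓝 (j b)) := by
  let B := Module.Basis.ofVectorSpace ℝ (StrongDual ℝ E)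
  let φ : WeakSpace ℝ E → Module.Basis.ofVectorSpaceIndex ℝ (StrongDual ℝ E) → ℝ :=
    fun x i => B i ((toWeakSpace ℝ E).symm x)
  have hev : ∀ f : StrongDual ℝ E,
      Continuous fun x : WeakSpace ℝ E => f ((toWeakSpace ℝ E).symm x) :=
    fun f => WeakBilin.eval_continuous (topDualPairing ℝ E).flip f
  have hφ : Topology.IsInducing φ := by
    constructor
    refine le_antisymm ?_ ?_
    · exact continuous_iff_le_induced.1 (continuous_pi fun i => hev (B i))
    · let τ := TopologicalSpace.induced φ Pi.topologicalSpace
      refine (@continuous_iff_le_induced _ _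
        (fun (x : WeakSpace ℝ E) (f : StrongDual ℝ E) => f ((toWeakSpace ℝ E).symm x)) τ _).1 ?_
      refine @continuous_pi _ _ _ τ _ _ fun f => ?_
      have h0 : @Continuous _ _ τ _ φ := continuous_induced_dom
      have : (fun x : WeakSpace ℝ E => f ((toWeakSpace ℝ E).symm x)) =
          fun x => ∑ i ∈ (B.repr f).support, B.repr f i * φ x i := by
        ext x
        conv_lhs => rw [← B.linearCombination_repr f, Finsupp.linearCombination_apply, Finsupp.sum]
        simp [φ]
      rw [this]
      have hg : Continuous fun y : Module.Basis.ofVectorSpaceIndex ℝ (StrongDual ℝ E) → ℝ =>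
          ∑ i ∈ (B.repr f).support, B.repr f i * y i :=
        continuous_finsetSum _ fun i _ => continuous_const.mul (continuous_apply i)
      have h3 := hg.comp h0
      exact h3
  have hs : ∀ s : Set (Module.Basis.ofVectorSpaceIndex ℝ (StrongDual ℝ E)), s.Finite →
      ∀ v : Module.Basis.ofVectorSpaceIndex ℝ (StrongDual ℝ E) → ℝ,
      ∃ x, ∀ i ∈ s, φ x i = v i := by
    intro s hs v
    have := hs.to_subtype
    let f : s → E → ℝ := fun i x => B i x
    have hli : LinearIndependent ℝ f := by
      have h1 : LinearIndependent ℝ (fun i : s => B i) :=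
        B.linearIndependent.comp _ Subtype.val_injective
      let c : StrongDual ℝ E →ₗ[ℝ] (E → ℝ) :=
        { toFun := fun g x => g x, map_add' := fun _ _ => rfl, map_smul' := fun _ _ => rfl }
      have hc : LinearMap.ker c = ⊥ := LinearMap.ker_eq_bot.2 fun g h H =>
        ContinuousLinearMap.ext fun x => congrFun H x
      exact h1.map' c hc
    have hsp := span_flip_eq_top_iff_linearIndependent.2 hli
    let L : E →ₗ[ℝ] (s → ℝ) :=
      { toFun := fun x i => B i x
        map_add' := fun x y => by ext i; simp
        map_smul' := fun x y => by ext i; simp }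
    have hle : (⊤ : Submodule ℝ (s → ℝ)) ≤ LinearMap.range L := by
      rw [← hsp, Submodule.span_le]
      rintro _ ⟨x, rfl⟩
      exact ⟨x, rfl⟩
    obtain ⟨x, hx⟩ := hle (x := fun i : s => v i) trivial
    exact ⟨toWeakSpace ℝ E x, fun i hi => congrFun hx ⟨i, hi⟩⟩
  obtain ⟨J, hJ, h⟩ := corson_aux φ hφ hs U V hU hV hd
  refine ⟨B '' J, hJ.image _, fun a b ha hb hab => h _ _ ha hb fun j hj => ?_⟩
  exact hab (B j) ⟨j, hj, rfl⟩

/-- The two-point combination `e_s + 2 e_t`. -/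
noncomputable def twoPt (q : ℝ × ℝ) : lp (fun _ : ℝ => ℝ) 1 :=
  lp.single 1 q.1 (1 : ℝ) + (2 : ℝ) • lp.single 1 q.2 (1 : ℝ)

theorem twoPt_apply (q : ℝ × ℝ) (r : ℝ) :
    (twoPt q r : ℝ) = (if r = q.1 then (1 : ℝ) else 0) + 2 * (if r = q.2 then (1 : ℝ) else 0) := by
  have h : (twoPt q r : ℝ) = (Pi.single q.1 (1 : ℝ) : ℝ → ℝ) r +
      2 * (Pi.single q.2 (1 : ℝ) : ℝ → ℝ) r := rfl
  rw [h, Pi.single_apply, Pi.single_apply]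

theorem twoPt_injective : Function.Injective twoPt := by
  rintro ⟨s, t⟩ ⟨s', t'⟩ h
  have h1 : ∀ r : ℝ, (if r = s then (1 : ℝ) else 0) + 2 * (if r = t then (1 : ℝ) else 0) =
      (if r = s' then (1 : ℝ) else 0) + 2 * (if r = t' then (1 : ℝ) else 0) := fun r => by
    rw [← twoPt_apply (s, t), ← twoPt_apply (s', t'), h]
  have a := h1 s
  have b := h1 t
  have c := h1 s'
  have d := h1 t'
  grind

theorem twoPt_closed (S : Set (ℝ × ℝ)) :
    IsClosed ((fun q => toWeakSpace ℝ (lp (fun _ : ℝ => ℝ) 1) (twoPt q)) '' S) := by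
  have hlf : LocallyFinite (fun q : S => ({toWeakSpace ℝ (lp (fun _ : ℝ => ℝ) 1) (twoPt q)} :
      Set (WeakSpace ℝ (lp (fun _ : ℝ => ℝ) 1)))) := by
    intro x
    let y : lp (fun _ : ℝ => ℝ) 1 := (toWeakSpace ℝ _).symm x
    have hsum : Summable (fun i => y i) := .of_norm (by simpa using (lp.memℓp y).summable)
    obtain ⟨Γ, hΓ⟩ := (hsum.hasSum.eventually (Metric.ball_mem_nhds _ one_pos)).exists
    let h : StrongDual ℝ (lp (fun _ : ℝ => ℝ) 1) :=
      lp.tsumCLM ℝ ℝ ℝ - ∑ i ∈ Γ, lp.evalCLM ℝ (fun _ : ℝ => ℝ) 1 i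
    have happ : ∀ z, h z = (∑' i, z i) - ∑ i ∈ Γ, z i := by
      intro z
      simp [h]
      rfl
    have hcont : Continuous fun z : WeakSpace ℝ (lp (fun _ : ℝ => ℝ) 1) =>
        h ((toWeakSpace ℝ _).symm z) :=
      WeakBilin.eval_continuous (topDualPairing ℝ (lp (fun _ : ℝ => ℝ) 1)).flip h
    refine ⟨{z | h ((toWeakSpace ℝ _).symm z) < 1},
      (isOpen_lt hcont continuous_const).mem_nhds ?_, ?_⟩
    · change h y < 1
      rw [happ]
      change |(∑ i ∈ Γ, (y i : ℝ)) - ∑' i, (y i : ℝ)| < 1 at hΓ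
      have := (abs_lt.1 hΓ).1
      linarith
    · refine Set.Finite.subset (s := Subtype.val ⁻¹' ((Γ ×ˢ Γ : Finset (ℝ × ℝ)) : Set (ℝ × ℝ)))
        ((Finset.finite_toSet _).preimage Subtype.val_injective.injOn) ?_
      rintro ⟨⟨s, t⟩, hq⟩ ⟨z, hz, hz2⟩
      rw [mem_singleton_iff] at hz
      subst hz
      have hlt : h (twoPt (s, t)) < 1 := hz2
      rw [happ] at hlt
      have e1 : ∑' i, twoPt (s, t) i = 3 := by
        simp only [twoPt_apply]
        rw [Summable.tsum_add, tsum_mul_left, tsum_ite_eq, tsum_ite_eq]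
        · norm_num
        · exact (hasSum_ite_eq s (1:ℝ)).summable
        · exact (hasSum_ite_eq t (1:ℝ)).summable.mul_left 2
      rw [e1] at hlt
      simp only [twoPt_apply, Finset.sum_add_distrib, ← Finset.mul_sum,
        Finset.sum_ite_eq'] at hlt
      simp only [mem_preimage, Finset.coe_product, mem_prod, Finset.mem_coe]
      by_cases h1 : s ∈ Γ <;> by_cases h2 : t ∈ Γ <;> simp [h1, h2] at hlt ⊢ <;> norm_num at hlt
  have := hlf.isClosed_iUnion (fun q => isClosed_singleton)
  convert this using 1
  ext z
  simp [eq_comm]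

theorem exists_acc_aux {T ι : Type*} [Uncountable T] [Countable ι] (ψ : T → ι → ℝ) :
    ∃ (b : T) (a : ℕ → T), (∀ n, a n ≠ b) ∧ ∀ j,
      Tendsto (fun n => ψ (a n) j) atTop (𝓝 (ψ b j)) := by
  by_contra hcon
  push Not at hcon
  let τ : TopologicalSpace T := TopologicalSpace.induced ψ Pi.topologicalSpace
  have hsc : SecondCountableTopology T := secondCountableTopology_induced _ _ ψ
  have hψ : Continuous ψ := continuous_induced_dom
  have hdisc : DiscreteTopology T := by
    refine discreteTopology_iff_isOpen_singleton.2 fun b => ?_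
    rw [isOpen_singleton_iff_punctured_nhds]
    by_contra hne
    have : NeBot (𝓝[≠] b) := ⟨hne⟩
    obtain ⟨x, hx⟩ := exists_seq_tendsto (𝓝[≠] b)
    have h1 : ∀ᶠ n in atTop, x n ∈ ({b}ᶜ : Set T) := hx.eventually self_mem_nhdsWithin
    obtain ⟨m, hm⟩ := eventually_atTop.1 h1
    have h2 : Tendsto (fun n => x (n + m)) atTop (𝓝 b) :=
      ((hx.mono_right inf_le_left).comp (tendsto_add_atTop_nat m))
    obtain ⟨j, hj⟩ := hcon b (fun n => x (n + m)) fun n => hm _ (Nat.le_add_left _ _)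
    exact hj (tendsto_pi_nhds.1 ((hψ.tendsto b).comp h2) j)
  have : Countable T := TopologicalSpace.separableSpace_iff_countable.1 inferInstance
  exact not_countable (α := T) this

theorem exists_acc (J : Set (StrongDual ℝ (lp (fun _ : ℝ => ℝ) 1))) (hJ : J.Countable) :
    ∃ (b : ℝ) (a : ℕ → ℝ), (∀ n, a n ≠ b) ∧ ∀ j ∈ J,
      Tendsto (fun n => j (lp.single 1 (a n) (1 : ℝ))) atTop (𝓝 (j (lp.single 1 b (1 : ℝ)))) := by
  have := hJ.to_subtype
  obtain ⟨b, a, h1, h2⟩ :=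
    exists_acc_aux (fun (t : ℝ) (j : J) => j.1 (lp.single 1 t (1 : ℝ)))
  exact ⟨b, a, h1, fun j hj => h2 ⟨j, hj⟩⟩

/-- The Banach space `ℓ₁(ℝ)` endowed with its weak topology is not normal. -/
theorem ellOne_real_weak_not_normal :
    ¬ NormalSpace (WeakSpace ℝ (lp (fun _ : ℝ => ℝ) 1)) := by
  intro hN
  obtain ⟨κ, hκ⟩ : ∃ κ : (ℕ → ℝ) × ℝ → ℝ, Function.Injective κ := by
    have : Cardinal.mk ((ℕ → ℝ) × ℝ) ≤ Cardinal.mk ℝ := by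
      have h0 : Cardinal.mk ℝ ^ Cardinal.aleph0 = Cardinal.mk ℝ := by
        rw [Cardinal.mk_real, Cardinal.continuum_power_aleph0]
      have h1 : Cardinal.mk ℝ * Cardinal.mk ℝ = Cardinal.mk ℝ := by
        rw [Cardinal.mk_real, Cardinal.continuum_mul_self]
      simp [h0, h1]
    exact ⟨_, (Cardinal.le_def _ _ |>.1 this).some.injective⟩
  let SA : Set (ℝ × ℝ) := {q | ∃ a b n, (∀ n, a n ≠ b) ∧ q = (κ (a, b), a n)}
  let SB : Set (ℝ × ℝ) := {q | ∃ a b, (∀ n, a n ≠ b) ∧ q = (κ (a, b), b)}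
  have hdis : Disjoint ((fun q => toWeakSpace ℝ (lp (fun _ : ℝ => ℝ) 1) (twoPt q)) '' SA)
      ((fun q => toWeakSpace ℝ (lp (fun _ : ℝ => ℝ) 1) (twoPt q)) '' SB) := by
    rw [disjoint_left]
    rintro _ ⟨_, ⟨a, b, n, hab, rfl⟩, rfl⟩ ⟨_, ⟨a', b', hab', rfl⟩, h⟩
    replace h := (twoPt_injective ((toWeakSpace ℝ _).injective h)).symm
    rw [Prod.mk.injEq] at h
    have := hκ h.1
    rw [Prod.mk.injEq] at this
    exact hab n (h.2.trans this.2.symm)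
  obtain ⟨U, V, hU, hV, hAU, hBV, hd⟩ := normal_separation (twoPt_closed SA) (twoPt_closed SB) hdis
  obtain ⟨J, hJ, h⟩ := weak_corson U V hU hV hd
  obtain ⟨b, a, hab, hlim⟩ := exists_acc J hJ
  refine h (fun n => twoPt (κ (a, b), a n)) (twoPt (κ (a, b), b))
    (fun n => hAU ⟨_, ⟨a, b, n, hab, rfl⟩, rfl⟩) (hBV ⟨_, ⟨a, b, hab, rfl⟩, rfl⟩) fun j hj => ?_
  simp only [twoPt, map_add, map_smul]
  exact tendsto_const_nhds.add ((hlim j hj).const_smul 2)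
end

section
/- Let X be a locally compact Hausdorff space and let C₀(X) be the Banach space of continuous real-valued functions on X vanishing at infinity, with the supremum norm. Then C₀(X) endowed with its weak topology σ(E,E′) is an ℵ-space if and only if X is countable. -/
open TopologicalSpace Filter Set

open scoped Topology

namespace CZeroAux


theorem norm_le_iff {X : Type} [TopologicalSpace X] (f : ZeroAtInftyContinuousMap X ℝ) {C : ℝ}
    (hC : 0 ≤ C) : ‖f‖ ≤ C ↔ ∀ x, |f x| ≤ C := by
  rw [← ZeroAtInftyContinuousMap.norm_toBCF_eq_norm, BoundedContinuousFunction.norm_le hC]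
  rfl

theorem abs_le_norm {X : Type} [TopologicalSpace X] (f : ZeroAtInftyContinuousMap X ℝ) (x : X) :
    |f x| ≤ ‖f‖ := (norm_le_iff f (norm_nonneg _)).1 le_rfl x

theorem tendsto_weak {E : Type} [NormedAddCommGroup E] [NormedSpace ℝ E] {α : Type*}
    {l : Filter α} {f : α → WeakSpace ℝ E} {x : WeakSpace ℝ E} :
    Tendsto f l (𝓝 x) ↔ ∀ φ : StrongDual ℝ E, Tendsto (fun i => φ ((toWeakSpace ℝ E).symm (f i))) l
      (𝓝 (φ ((toWeakSpace ℝ E).symm x))) := by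
  refine WeakBilin.tendsto_iff_forall_eval_tendsto (B := (topDualPairing ℝ E).flip) ?_
  intro a b hab
  by_contra hne
  obtain ⟨f, hf⟩ := SeparatingDual.exists_separating_of_ne (R := ℝ) hne
  exact hf (DFunLike.congr_fun hab f)

theorem continuous_weak {E : Type} [NormedAddCommGroup E] [NormedSpace ℝ E]
    (φ : StrongDual ℝ E) : Continuous (fun g : WeakSpace ℝ E => φ ((toWeakSpace ℝ E).symm g)) := by
  rw [continuous_iff_continuousAt]
  intro x
  exact (tendsto_weak.1 (tendsto_id (x := 𝓝 x))) φ

theorem t2_weak {E : Type} [NormedAddCommGroup E] [NormedSpace ℝ E] : T2Space (WeakSpace ℝ E) := by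
  refine ⟨fun a b hne => ?_⟩
  have hne' : (toWeakSpace ℝ E).symm a ≠ (toWeakSpace ℝ E).symm b := by simpa using hne
  obtain ⟨f, hf⟩ := SeparatingDual.exists_separating_of_ne (R := ℝ) hne'
  exact separated_by_continuous (continuous_weak f) hf

/-- compose with a real function -/
def post {X : Type} [TopologicalSpace X] (u : ℝ → ℝ) (hu : Continuous u) (h0 : u 0 = 0)
    (f : ZeroAtInftyContinuousMap X ℝ) : ZeroAtInftyContinuousMap X ℝ where
  toFun x := u (f x)
  continuous_toFun := hu.comp (map_continuous f)
  zero_at_infty' := by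
    have := (hu.tendsto 0).comp (zero_at_infty f)
    rwa [h0] at this

/-- a compactly supported function -/
def ofCpt {X : Type} [TopologicalSpace X] (f : X → ℝ) (hf : Continuous f)
    (hc : HasCompactSupport f) : ZeroAtInftyContinuousMap X ℝ where
  toFun := f
  continuous_toFun := hf
  zero_at_infty' := hc.is_zero_at_infty

noncomputable def evalCLM {X : Type} [TopologicalSpace X] (x : X) :
    ZeroAtInftyContinuousMap X ℝ →L[ℝ] ℝ :=
  LinearMap.mkContinuous
    { toFun := fun f => f x
      map_add' := fun _ _ => rfl
      map_smul' := fun _ _ => rfl } 1 (fun f => by simpa using abs_le_norm f x)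

@[simp] theorem evalCLM_apply {X : Type} [TopologicalSpace X] (x : X)
    (f : ZeroAtInftyContinuousMap X ℝ) : evalCLM x f = f x := rfl

theorem mul_self_dist {X : Type} [TopologicalSpace X] (f : ZeroAtInftyContinuousMap X ℝ)
    {δ : ℝ} (hδ : 0 < δ) : IsCompact {x | δ ≤ |f x|} := by
  have h := (zero_at_infty f)
  have h2 : ∀ᶠ x in cocompact X, |f x| < δ := by
    have := h.eventually (Metric.ball_mem_nhds 0 hδ)
    simpa using this
  obtain ⟨K, hK, hK2⟩ := Filter.mem_cocompact.1 h2
  refine hK.of_isClosed_subset ?_ ?_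
  · exact isClosed_le continuous_const (map_continuous f).abs
  · intro x hx
    by_contra hxK
    have h3 : |f x| < δ := hK2 hxK
    have h4 : δ ≤ |f x| := hx
    linarith

section Variation
variable {X : Type} [TopologicalSpace X] 

/-- admissible test functions in U -/
def Good (U : Set X) (g : ZeroAtInftyContinuousMap X ℝ) : Prop :=
  ‖g‖ ≤ 1 ∧ HasCompactSupport g ∧ tsupport g ⊆ U

noncomputable def nu (φ : StrongDual ℝ (ZeroAtInftyContinuousMap X ℝ)) (U : Set X) : ℝ :=
  sSup {r | ∃ g, Good U g ∧ φ g = r}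

noncomputable def mm (φ : StrongDual ℝ (ZeroAtInftyContinuousMap X ℝ)) (Z : Set X) : ℝ :=
  sInf {r | ∃ U, IsOpen U ∧ Z ⊆ U ∧ nu φ U = r}

theorem good_zero (U : Set X) : Good U 0 := by
  refine ⟨by simp, ?_, ?_⟩
  · rw [ZeroAtInftyContinuousMap.coe_zero]; exact HasCompactSupport.zero
  · rw [ZeroAtInftyContinuousMap.coe_zero]; simp [tsupport]

theorem le_norm_of_norm_le (φ : StrongDual ℝ (ZeroAtInftyContinuousMap X ℝ))
    {g : ZeroAtInftyContinuousMap X ℝ} (h : ‖g‖ ≤ 1) : φ g ≤ ‖φ‖ :=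
  (le_abs_self _).trans (φ.unit_le_opNorm g h)

theorem nu_bdd (φ : StrongDual ℝ (ZeroAtInftyContinuousMap X ℝ)) (U : Set X) :
    BddAbove {r | ∃ g, Good U g ∧ φ g = r} := by
  refine ⟨‖φ‖, ?_⟩
  rintro r ⟨g, hg, rfl⟩
  exact le_norm_of_norm_le φ hg.1

theorem le_nu (φ : StrongDual ℝ (ZeroAtInftyContinuousMap X ℝ)) {U : Set X}
    {g : ZeroAtInftyContinuousMap X ℝ} (h : Good U g) : φ g ≤ nu φ U :=
  le_csSup (nu_bdd φ U) ⟨g, h, rfl⟩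

theorem nu_nonneg (φ : StrongDual ℝ (ZeroAtInftyContinuousMap X ℝ)) (U : Set X) : 0 ≤ nu φ U := by
  simpa using le_nu φ (good_zero U)

theorem mm_bdd (φ : StrongDual ℝ (ZeroAtInftyContinuousMap X ℝ)) (Z : Set X) :
    BddBelow {r | ∃ U, IsOpen U ∧ Z ⊆ U ∧ nu φ U = r} :=
  ⟨0, by rintro r ⟨U, -, -, rfl⟩; exact nu_nonneg φ U⟩

theorem mm_nonneg (φ : StrongDual ℝ (ZeroAtInftyContinuousMap X ℝ)) (Z : Set X) : 0 ≤ mm φ Z :=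
  Real.sInf_nonneg (by rintro r ⟨U, -, -, rfl⟩; exact nu_nonneg φ U)

theorem mm_le (φ : StrongDual ℝ (ZeroAtInftyContinuousMap X ℝ)) {Z U : Set X} (hU : IsOpen U)
    (h : Z ⊆ U) : mm φ Z ≤ nu φ U := csInf_le (mm_bdd φ Z) ⟨U, hU, h, rfl⟩

theorem exists_nu_lt (φ : StrongDual ℝ (ZeroAtInftyContinuousMap X ℝ)) (Z : Set X) {η : ℝ}
    (hη : 0 < η) : ∃ U, IsOpen U ∧ Z ⊆ U ∧ nu φ U < mm φ Z + η := by
  obtain ⟨r, ⟨U, h1, h2, rfl⟩, h3⟩ := exists_lt_of_csInf_lt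
    (s := {r | ∃ U, IsOpen U ∧ Z ⊆ U ∧ nu φ U = r}) ⟨_, univ, isOpen_univ, subset_univ _, rfl⟩
    (show mm φ Z < mm φ Z + η by linarith)
  exact ⟨U, h1, h2, h3⟩

theorem exists_good_gt (φ : StrongDual ℝ (ZeroAtInftyContinuousMap X ℝ)) {Z U : Set X} {η : ℝ}
    (hη : 0 < η) (hU : IsOpen U) (h : Z ⊆ U) : ∃ g, Good U g ∧ mm φ Z - η < φ g := by
  obtain ⟨r, ⟨g, h1, rfl⟩, h3⟩ := exists_lt_of_lt_csSup
    (s := {r | ∃ g, Good U g ∧ φ g = r}) ⟨_, 0, good_zero U, rfl⟩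
    (show mm φ Z - η < nu φ U by linarith [mm_le φ hU h])
  exact ⟨g, h1, h3⟩

theorem sum_aux [T2Space X] (φ : StrongDual ℝ (ZeroAtInftyContinuousMap X ℝ)) {ι : Type*}
    (Z : ι → Set X) (hZ : ∀ i, IsCompact (Z i)) (hd : Pairwise (Function.onFun Disjoint Z))
    {η : ℝ} (hη : 0 < η) (S : Finset ι) :
    ∀ W : Set X, IsOpen W → (∀ i ∈ S, Z i ⊆ W) → ∃ g, Good W g ∧ ∑ i ∈ S, (mm φ (Z i) - η) ≤ φ g := by
  classical
  induction S using Finset.induction_on with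
  | empty => intro W _ _; exact ⟨0, good_zero W, by simp⟩
  | insert j S hj ih =>
    intro W hW hS
    have hc : IsCompact (⋃ i ∈ S, Z i) := S.isCompact_biUnion (fun i _ => hZ i)
    have hdis : Disjoint (Z j) (⋃ i ∈ S, Z i) := by
      rw [disjoint_iUnion₂_right]
      intro i hi
      exact hd (by rintro rfl; exact hj hi)
    obtain ⟨A, B, hA, hB, hjA, hSB, hAB⟩ := SeparatedNhds.of_isCompact_isCompact (hZ j) hc hdis
    obtain ⟨g, hg, hgs⟩ := ih (B ∩ W) (hB.inter hW) (fun i hi => subset_inter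
      ((subset_biUnion_of_mem (u := fun i => Z i) (show i ∈ (S : Set ι) from hi)).trans hSB)
      (hS i (Finset.mem_insert_of_mem hi)))
    obtain ⟨f, hf, hfs⟩ := exists_good_gt φ hη (hA.inter hW)
      (subset_inter hjA (hS j (Finset.mem_insert_self _ _)))
    refine ⟨f + g, ⟨?_, ?_, ?_⟩, ?_⟩
    · rw [norm_le_iff _ zero_le_one]
      intro x
      rw [ZeroAtInftyContinuousMap.add_apply]
      by_cases hx : x ∈ A
      · have : g x = 0 := by
          by_contra h
          exact disjoint_left.1 hAB hx (hg.2.2 (subset_tsupport _ h)).1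
        rw [this, add_zero]
        exact (abs_le_norm f x).trans hf.1
      · have : f x = 0 := by
          by_contra h
          exact hx (hf.2.2 (subset_tsupport _ h)).1
        rw [this, zero_add]
        exact (abs_le_norm g x).trans hg.1
    · exact hf.2.1.add hg.2.1
    · refine (tsupport_add _ _).trans (union_subset ?_ ?_)
      · exact hf.2.2.trans inter_subset_right
      · exact hg.2.2.trans inter_subset_right
    · rw [Finset.sum_insert hj, map_add]
      linarith

theorem sum_mm_le [T2Space X] (φ : StrongDual ℝ (ZeroAtInftyContinuousMap X ℝ)) {ι : Type*}
    (Z : ι → Set X) (hZ : ∀ i, IsCompact (Z i)) (hd : Pairwise (Function.onFun Disjoint Z))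
    (S : Finset ι) : ∑ i ∈ S, mm φ (Z i) ≤ ‖φ‖ := by
  refine le_of_forall_pos_le_add fun ε hε => ?_
  have hpos : (0 : ℝ) < S.card + 1 := by positivity
  obtain ⟨g, hg, h⟩ := sum_aux φ Z hZ hd (div_pos hε hpos) S univ isOpen_univ
    (fun _ _ => subset_univ _)
  have := le_norm_of_norm_le φ hg.1
  rw [Finset.sum_sub_distrib, Finset.sum_const, nsmul_eq_mul] at h
  have h2 : (S.card : ℝ) * (ε / (S.card + 1)) ≤ ε := by
    rw [mul_div_assoc', div_le_iff₀ hpos]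
    nlinarith
  linarith

theorem nu_subadd [T2Space X] [LocallyCompactSpace X]
    (φ : StrongDual ℝ (ZeroAtInftyContinuousMap X ℝ)) {ι : Type*}
    (U : ι → Set X) (hU : ∀ i, IsOpen (U i)) (S : Finset ι) (g : ZeroAtInftyContinuousMap X ℝ)
    (hg : Good (⋃ i ∈ S, U i) g) : φ g ≤ ∑ i ∈ S, nu φ (U i) := by
  classical
  obtain ⟨f, h1, h2, h3, h4⟩ := exists_continuous_sum_one_of_isOpen_isCompact
    (n := S.card) (t := tsupport g) (s := fun i => U (S.equivFin.symm i)) (fun i => hU _)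
    hg.2.1 (by
      refine hg.2.2.trans ?_
      intro x hx
      simp only [mem_iUnion] at hx ⊢
      obtain ⟨i, hi, hx⟩ := hx
      exact ⟨S.equivFin ⟨i, hi⟩, by simpa using hx⟩)
  let F : Fin S.card → ZeroAtInftyContinuousMap X ℝ := fun i =>
    ofCpt (fun x => f i x * g x) ((f i).continuous.mul (map_continuous g)) ((h4 i).mul_right)
  have hF : ∀ i, Good (U (S.equivFin.symm i)) (F i) := by
    intro i
    refine ⟨?_, (h4 i).mul_right, (tsupport_mul_subset_left).trans (h1 i)⟩
    rw [norm_le_iff _ zero_le_one]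
    intro x
    change |f i x * g x| ≤ 1
    rw [abs_mul]
    have := h3 i x
    exact mul_le_one₀ (abs_le.2 ⟨by linarith [this.1], this.2⟩) (abs_nonneg _)
      ((abs_le_norm g x).trans hg.1)
  have hsum : g = ∑ i, F i := by
    ext x
    have e : (∑ i, F i) x = ∑ i, (F i) x := by
      exact map_sum (evalCLM x) F Finset.univ
    rw [e]
    change g x = ∑ i, f i x * g x
    rw [← Finset.sum_mul]
    by_cases hx : x ∈ tsupport g
    · have := h2 hx
      simp only [Finset.sum_apply, Pi.one_apply] at this
      rw [this, one_mul]
    · rw [image_eq_zero_of_notMem_tsupport hx, mul_zero]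
  calc φ g = ∑ i, φ (F i) := by rw [hsum, map_sum]
    _ ≤ ∑ i, nu φ (U (S.equivFin.symm i)) := Finset.sum_le_sum fun i _ => le_nu φ (hF i)
    _ = ∑ i : S, nu φ (U i) := Equiv.sum_comp S.equivFin.symm (fun i : S => nu φ (U i))
    _ = _ := Finset.sum_coe_sort S (fun i => nu φ (U i))

theorem key [T2Space X] [LocallyCompactSpace X]
    (φ : StrongDual ℝ (ZeroAtInftyContinuousMap X ℝ)) {ι : Type*} [Countable ι]
    (Z : ι → Set X) (hZ : ∀ i, IsCompact (Z i)) (hd : Pairwise (Function.onFun Disjoint Z))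
    {ε : ℝ} (hε : 0 < ε) : ∃ I : Finset ι, ∀ f : ZeroAtInftyContinuousMap X ℝ, ‖f‖ ≤ 1 → ∀ δ > 0,
      (∀ x, δ ≤ |f x| → ∃ i, i ∉ I ∧ x ∈ Z i) → |φ f| ≤ δ * ‖φ‖ + ε := by
  classical
  have hsum : Summable (fun i => mm φ (Z i)) :=
    summable_of_sum_le (fun i => mm_nonneg φ _) (sum_mm_le φ Z hZ hd)
  obtain ⟨I, hI⟩ := summable_iff_vanishing_norm.1 hsum (ε / 2) (by positivity)
  obtain ⟨e, he, c, hc, hce⟩ := NNReal.exists_pos_sum_of_countable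
    (ε := ⟨ε / 2, by positivity⟩) (by
      intro h
      have := congrArg NNReal.toReal h
      change ε / 2 = 0 at this
      linarith) ι
  have hesum : ∀ S : Finset ι, ∑ i ∈ S, (e i : ℝ) ≤ ε / 2 := by
    intro S
    have h1 : ∑ i ∈ S, e i ≤ c := sum_le_hasSum S (fun _ _ => zero_le) hc
    have h2 := (h1.trans hce.le)
    have h3 : ((∑ i ∈ S, e i : NNReal) : ℝ) ≤ ε / 2 := h2
    simpa using h3
  choose U hUo hZU hUlt using fun i => exists_nu_lt φ (Z i) (η := e i) (he i)
  refine ⟨I, ?_⟩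
  have main : ∀ f : ZeroAtInftyContinuousMap X ℝ, ‖f‖ ≤ 1 → ∀ δ > 0,
      (∀ x, δ ≤ |f x| → ∃ i, i ∉ I ∧ x ∈ Z i) → φ f ≤ δ * ‖φ‖ + ε := by
    intro f hf δ hδ hx
    let u : ℝ → ℝ := fun t => max (-δ) (min t δ)
    have hu : Continuous u := by fun_prop
    have hu0 : u 0 = 0 := by simp [u, hδ.le]
    have hub : ∀ t, |u t| ≤ δ := fun t => abs_le.2
      ⟨le_max_left _ _, max_le (by linarith) (min_le_right _ _)⟩
    have hu1 : ∀ t, |t| ≤ δ → t - u t = 0 := by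
      intro t ht
      have := abs_le.1 ht
      simp [u, this.1, this.2]
    have hu2 : ∀ t, |t - u t| ≤ |t| := by
      intro t
      by_cases h : |t| ≤ δ
      · rw [hu1 t h]; simp
      · rw [not_le, lt_abs] at h
        rcases h with h | h
        · have : u t = δ := by simp [u, h.le]; linarith
          rw [this, abs_of_pos (by linarith), abs_of_pos (by linarith)]; linarith
        · have : u t = -δ := by
            simp only [u]
            rw [min_eq_left (by linarith), max_eq_left (by linarith)]
          rw [this, abs_of_neg (by linarith), abs_of_neg (by linarith)]; linarith
    have hcomp := mul_self_dist f hδ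
    let f1 := post u hu hu0 f
    let f2 := post (fun t => t - u t) (continuous_id.sub hu) (by simp [hu0]) f
    have hff : f = f1 + f2 := by
      ext x
      change f x = u (f x) + (f x - u (f x))
      ring
    have hts : tsupport f2 ⊆ {x | δ ≤ |f x|} := by
      refine closure_minimal ?_ hcomp.isClosed
      intro x hx
      by_contra h
      rw [mem_ofPred_eq, not_le] at h
      exact hx (hu1 _ h.le)
    have hcs : HasCompactSupport f2 := hcomp.of_isClosed_subset (isClosed_tsupport _) hts
    have hcov : tsupport f2 ⊆ ⋃ i : {i // i ∉ I}, U i := by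
      intro x hxs
      obtain ⟨i, hi, hxi⟩ := hx x (hts hxs)
      exact mem_iUnion.2 ⟨⟨i, hi⟩, hZU i hxi⟩
    obtain ⟨T, hT⟩ := IsCompact.elim_finite_subcover hcs (fun i : {i // i ∉ I} => U i)
      (fun i => hUo i) hcov
    let S : Finset ι := T.map (Function.Embedding.subtype _)
    have hTS : (⋃ i ∈ T, U i) ⊆ ⋃ i ∈ S, U i := by
      intro x hx
      simp only [mem_iUnion] at hx ⊢
      obtain ⟨i, hi, hx⟩ := hx
      exact ⟨i, Finset.mem_map.2 ⟨i, hi, rfl⟩, hx⟩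
    have hdis : Disjoint S I := by
      rw [Finset.disjoint_left]
      intro i hi
      obtain ⟨j, _, rfl⟩ := Finset.mem_map.1 hi
      exact j.2
    have hgood : Good (⋃ i ∈ S, U i) f2 := by
      refine ⟨?_, hcs, hT.trans hTS⟩
      rw [norm_le_iff _ zero_le_one]
      intro x
      exact (hu2 (f x)).trans ((abs_le_norm f x).trans hf)
    have h2 := nu_subadd φ U hUo S f2 hgood
    have h3 : ∑ i ∈ S, nu φ (U i) ≤ ∑ i ∈ S, (mm φ (Z i) + e i) :=
      Finset.sum_le_sum fun i _ => (hUlt i).le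
    rw [Finset.sum_add_distrib] at h3
    have h4 := (le_abs_self _).trans (hI S hdis).le
    have h5 := hesum S
    have h6 : φ f1 ≤ ‖φ‖ * δ := by
      refine (le_abs_self _).trans (φ.le_opNorm_of_le ?_)
      rw [norm_le_iff _ hδ.le]
      exact fun x => hub _
    rw [hff, map_add]
    linarith
  intro f hf δ hδ hx
  refine abs_le.2 ⟨?_, main f hf δ hδ hx⟩
  have := main (-f) (by simpa using hf) δ hδ (by simpa using hx)
  rw [map_neg] at this
  linarith

end Variation

theorem exists_network_at {S : Type} [TopologicalSpace S] {N : Set (Set S)}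
    (hσ : IsSigmaLocallyFinite N) (hk : IsKNetwork N) (a : S) :
    ∃ N0 : Set (Set S), N0.Countable ∧ ∀ g : ℕ → S, Tendsto g atTop (𝓝 a) → ∀ U, IsOpen U → a ∈ U →
      ∃ F, F ⊆ N0 ∧ F.Finite ∧ ⋃₀ F ⊆ U ∧ ∀ᶠ n in atTop, g n ∈ ⋃₀ F := by
  refine ⟨{A | A ∈ N ∧ a ∈ closure A}, ?_, ?_⟩
  · obtain ⟨f, hf, rfl⟩ := hσ
    have : {A | A ∈ (⋃ n, f n) ∧ a ∈ closure A} ⊆ ⋃ n, {A | A ∈ f n ∧ a ∈ closure A} := by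
      rintro A ⟨hA, hA2⟩
      obtain ⟨n, hn⟩ := mem_iUnion.1 hA
      exact mem_iUnion.2 ⟨n, hn, hA2⟩
    refine Countable.mono this (countable_iUnion fun n => ?_)
    obtain ⟨V, hV, hfin⟩ := hf n a
    refine (hfin.subset ?_).countable
    rintro A ⟨hA, hA2⟩
    refine ⟨hA, ?_⟩
    obtain ⟨x, hx⟩ := mem_closure_iff_nhds.1 hA2 V hV
    exact ⟨x, hx.2, hx.1⟩
  · intro g hg U hU haU
    obtain ⟨k, hk0⟩ := eventually_atTop.1 (hg.eventually (hU.mem_nhds haU))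
    have hg' : Tendsto (fun n => g (n + k)) atTop (𝓝 a) := (tendsto_add_atTop_iff_nat k).2 hg
    obtain ⟨F, hFN, hFf, hKF, hFU⟩ := hk _ U hg'.isCompact_insert_range hU (by
      rintro x (rfl | ⟨n, rfl⟩)
      · exact haU
      · exact hk0 _ (by omega))
    refine ⟨{A | A ∈ F ∧ a ∈ closure A}, ?_, hFf.subset fun A hA => hA.1,
      (sUnion_subset_sUnion fun A hA => hA.1).trans hFU, ?_⟩
    · rintro A ⟨h1, h2⟩
      exact ⟨hFN h1, h2⟩
    · have hev : ∀ᶠ x in 𝓝 a, ∀ A ∈ {A | A ∈ F ∧ a ∉ closure A}, x ∉ A := by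
        rw [eventually_all_finite (hFf.subset fun A hA => hA.1)]
        rintro A ⟨_, hA⟩
        filter_upwards [isClosed_closure.isOpen_compl.mem_nhds hA] with x hx hxA
        exact hx (subset_closure hxA)
      filter_upwards [hg.eventually hev, eventually_ge_atTop k] with n hn hnk
      have : g n ∈ ⋃₀ F := hKF (Or.inr ⟨n - k, by simp [hnk]⟩)
      obtain ⟨A, hA, hgA⟩ := this
      refine ⟨A, ⟨hA, ?_⟩, hgA⟩
      by_contra hcl
      exact hn A ⟨hA, hcl⟩ hgA

section
variable {X : Type} [TopologicalSpace X] [T2Space X] [LocallyCompactSpace X]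

theorem pointwise_null (g : ℕ → ZeroAtInftyContinuousMap X ℝ) (hb : ∀ n, ‖g n‖ ≤ 1)
    (hc : (range (fun x n => g n x)).Countable) (hp : ∀ x, Tendsto (fun n => g n x) atTop (𝓝 0))
    (φ : StrongDual ℝ (ZeroAtInftyContinuousMap X ℝ)) :
    Tendsto (fun n => φ (g n)) atTop (𝓝 0) := by
  let h : X → ℕ → ℝ := fun x n => g n x
  have hcont : Continuous h := continuous_pi fun n => map_continuous (g n)
  let ι := {y : ℕ → ℝ // y ∈ range h ∧ y ≠ 0}
  haveI : Countable ι := (hc.mono (fun y (hy : y ∈ {y | y ∈ range h ∧ y ≠ 0}) => hy.1)).to_subtype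
  let Z : ι → Set X := fun y => h ⁻¹' {y.1}
  have hZ : ∀ i, IsCompact (Z i) := by
    rintro ⟨y, hy, hy0⟩
    obtain ⟨n, hn⟩ : ∃ n, y n ≠ 0 := by
      by_contra hh
      push Not at hh
      exact hy0 (funext hh)
    refine (mul_self_dist (g n) (abs_pos.2 hn)).of_isClosed_subset
      (isClosed_singleton.preimage hcont) ?_
    intro x hx
    have : h x = y := hx
    have h2 : g n x = y n := congrFun this n
    change |y n| ≤ |g n x|
    rw [h2]
  have hd : Pairwise (Function.onFun Disjoint Z) := by
    intro i j hij
    refine disjoint_left.2 fun x hx hx' => hij (Subtype.ext ?_)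
    have h1 : h x = i.1 := hx
    have h2 : h x = j.1 := hx'
    rw [← h1, ← h2]
  rw [Metric.tendsto_atTop']
  intro ε hε
  obtain ⟨I, hI⟩ := key φ Z hZ hd (ε := ε / 3) (by positivity)
  have hφ : 0 < ‖φ‖ + 1 := by positivity
  set δ := ε / (3 * (‖φ‖ + 1)) with hδ
  have hδ0 : 0 < δ := by positivity
  have hδφ : δ * ‖φ‖ ≤ ε / 3 := by
    have : δ * (‖φ‖ + 1) = ε / 3 := by rw [hδ]; field_simp
    nlinarith
  have hev : ∀ᶠ n in atTop, ∀ i ∈ I, |i.1 n| < δ := by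
    rw [Filter.eventually_all_finset]
    rintro ⟨y, ⟨x, rfl⟩, hy0⟩ _
    have := (hp x).eventually (Metric.ball_mem_nhds 0 hδ0)
    simpa using this
  obtain ⟨n0, hn0⟩ := eventually_atTop.1 hev
  refine ⟨n0, fun n hn => ?_⟩
  have := hI (g n) (hb n) δ hδ0 (by
    intro x hx
    have hne : h x ≠ 0 := by
      intro h0
      have : g n x = 0 := congrFun h0 n
      rw [this, abs_zero] at hx
      linarith
    refine ⟨⟨h x, ⟨x, rfl⟩, hne⟩, fun hmem => ?_, rfl⟩
    have := hn0 n hn.le _ hmem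
    change |g n x| < δ at this
    linarith)
  rw [Real.dist_eq, sub_zero]
  linarith

/-- zero is in the pointwise closure of M -/
def PC (M : Set (ZeroAtInftyContinuousMap X ℝ)) : Prop :=
  ∀ D : Set X, D.Finite → ∀ ε > 0, ∃ g ∈ M, ∀ x ∈ D, |g x| < ε

/-- extension to the one-point compactification -/
def gp (g : ZeroAtInftyContinuousMap X ℝ) : OnePoint X → ℝ := fun x => x.elim 0 g

theorem gp_cont (g : ZeroAtInftyContinuousMap X ℝ) : Continuous (gp g) := by
  rw [OnePoint.continuous_iff]
  refine ⟨?_, map_continuous g⟩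
  rw [coclosedCompact_eq_cocompact]
  exact zero_at_infty g

theorem tight (M : Set (ZeroAtInftyContinuousMap X ℝ)) (hM : PC M) :
    ∃ M', M' ⊆ M ∧ M'.Countable ∧ PC M' := by
  have step : ∀ k j : ℕ, ∃ T : Set (ZeroAtInftyContinuousMap X ℝ), T.Finite ∧ T ⊆ M ∧
      ∀ x : Fin k → X, ∃ g ∈ T, ∀ i, |g (x i)| < 1 / ((j : ℝ) + 1) := by
    intro k j
    have hj : (0 : ℝ) < 1 / ((j : ℝ) + 1) := by positivity
    have : ∀ x : Fin k → OnePoint X, ∃ g ∈ M, ∀ i, |gp g (x i)| < 1 / ((j : ℝ) + 1) := by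
      intro x
      obtain ⟨g, hg, hgx⟩ := hM ((fun a : X => (a : OnePoint X)) ⁻¹' (range x))
        ((finite_range x).preimage OnePoint.coe_injective.injOn) _ hj
      refine ⟨g, hg, fun i => ?_⟩
      rcases h : x i with _ | a
      · change |(0 : ℝ)| < _
        simpa using hj
      · exact hgx a ⟨i, h⟩
    choose G hG hGx using this
    obtain ⟨t, ht⟩ := CompactSpace.elim_nhds_subcover
      (fun x : Fin k → OnePoint X => {z | ∀ i, |gp (G x) (z i)| < 1 / ((j : ℝ) + 1)}) (by
        intro x
        have : ∀ᶠ z in 𝓝 x, ∀ i, |gp (G x) (z i)| < 1 / ((j : ℝ) + 1) := by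
          rw [eventually_all]
          intro i
          have hc : Continuous fun z : Fin k → OnePoint X => |gp (G x) (z i)| :=
            ((gp_cont (G x)).comp (continuous_apply i)).abs
          exact hc.continuousAt.eventually (gt_mem_nhds (hGx x i))
        exact this)
    refine ⟨G '' t, t.finite_toSet.image G, ?_, ?_⟩
    · rintro _ ⟨x, _, rfl⟩
      exact hG x
    · intro x
      have : (fun i => (x i : OnePoint X)) ∈ (⊤ : Set (Fin k → OnePoint X)) := trivial
      rw [← ht] at this
      simp only [mem_iUnion] at this
      obtain ⟨z, hz, hzx⟩ := this
      exact ⟨G z, ⟨z, hz, rfl⟩, hzx⟩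
  choose T hT1 hT2 hT3 using step
  refine ⟨⋃ k, ⋃ j, T k j, ?_, ?_, ?_⟩
  · exact iUnion_subset fun k => iUnion_subset fun j => hT2 k j
  · exact countable_iUnion fun k => countable_iUnion fun j => (hT1 k j).countable
  · intro D hD ε hε
    obtain ⟨k, x, _, rfl⟩ := hD.fin_param
    obtain ⟨j, hj⟩ := exists_nat_one_div_lt hε
    obtain ⟨g, hg, hgx⟩ := hT3 k j x
    refine ⟨g, mem_iUnion.2 ⟨k, mem_iUnion.2 ⟨j, hg⟩⟩, ?_⟩
    rintro _ ⟨i, rfl⟩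
    exact (hgx i).trans hj

theorem exists_null_seq
    (H : ∀ g : ℕ → ZeroAtInftyContinuousMap X ℝ, (range (fun x n => g n x)).Countable)
    (M : ℕ → Set (ZeroAtInftyContinuousMap X ℝ)) (hM : ∀ n, PC (M n)) :
    ∃ g : ℕ → ZeroAtInftyContinuousMap X ℝ, (∀ n, g n ∈ M n) ∧
      ∀ x, Tendsto (fun n => g n x) atTop (𝓝 0) := by
  choose M' hM1 hM2 hM3 using fun n => tight (M n) (hM n)
  rcases isEmpty_or_nonempty X with hX | hX
  · choose g hg _ using fun n => hM n ∅ finite_empty 1 one_pos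
    exact ⟨g, hg, fun x => hX.elim x⟩
  have hne : (⋃ n, M' n).Nonempty := by
    obtain ⟨g, hg, _⟩ := hM3 0 ∅ finite_empty 1 one_pos
    exact ⟨g, mem_iUnion.2 ⟨0, hg⟩⟩
  obtain ⟨e, he⟩ := (countable_iUnion hM2).exists_eq_range hne
  obtain ⟨y, hy⟩ := (H e).exists_eq_range (range_nonempty _)
  have : ∀ i, ∃ x : X, (fun n => e n x) = y i := fun i => by
    have : y i ∈ range (fun x n => e n x) := hy ▸ mem_range_self i
    exact this
  choose r hr using this
  have : ∀ n : ℕ, ∃ g ∈ M' n, ∀ x ∈ r '' (Iic n), |g x| < 1 / ((n : ℝ) + 1) := fun n =>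
    hM3 n _ ((finite_Iic n).image r) _ (by positivity)
  choose g hg hgr using this
  refine ⟨g, fun n => hM1 n (hg n), fun x => ?_⟩
  obtain ⟨i, hi⟩ : (fun n => e n x) ∈ range y := hy ▸ mem_range_self x
  have hxr : ∀ n, g n x = g n (r i) := by
    intro n
    obtain ⟨m, hm⟩ : g n ∈ range e := he ▸ mem_iUnion.2 ⟨n, hg n⟩
    rw [← hm]
    exact congrFun (hi.symm.trans (hr i).symm) m
  refine squeeze_zero_norm' ?_ tendsto_one_div_add_atTop_nhds_zero_nat
  filter_upwards [eventually_ge_atTop i] with n hn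
  rw [hxr]
  exact (hgr n _ ⟨i, hn, rfl⟩).le

theorem isOpen_eval (p : X) (r : ℝ) : IsOpen {f : WeakSpace ℝ (ZeroAtInftyContinuousMap X ℝ) |
    |(toWeakSpace ℝ (ZeroAtInftyContinuousMap X ℝ)).symm f p| < r} :=
  isOpen_lt (continuous_weak (evalCLM p)).abs continuous_const

theorem case_two {N : Set (Set (WeakSpace ℝ (ZeroAtInftyContinuousMap X ℝ)))}
    (hσ : IsSigmaLocallyFinite N) (hk : IsKNetwork N)
    (H : ∀ g : ℕ → ZeroAtInftyContinuousMap X ℝ, (range (fun x n => g n x)).Countable) :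
    Countable X := by
  obtain ⟨N0, hN0, hN⟩ := exists_network_at hσ hk 0
  let w := toWeakSpace ℝ (ZeroAtInftyContinuousMap X ℝ)
  let U : X → Set (WeakSpace ℝ (ZeroAtInftyContinuousMap X ℝ)) := fun p => {f | |w.symm f p| < 1 / 2}
  have hU0 : ∀ p, (0 : WeakSpace ℝ (ZeroAtInftyContinuousMap X ℝ)) ∈ U p := by
    intro p
    change |w.symm 0 p| < 1 / 2
    rw [map_zero]
    simp
  have claim : ∀ p : X, ∃ F : Set (Set (WeakSpace ℝ (ZeroAtInftyContinuousMap X ℝ))),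
      F ⊆ insert ∅ N0 ∧ F.Finite ∧ ⋃₀ F ⊆ U p ∧ ∃ D : Set X, D.Finite ∧ ∃ δ > 0,
        ∀ g : ZeroAtInftyContinuousMap X ℝ, ‖g‖ ≤ 1 → (∀ x ∈ D, |g x| < δ) → w g ∈ ⋃₀ F := by
    intro p
    by_contra hcon
    have hcount : {A | A ∈ insert ∅ N0 ∧ A ⊆ U p}.Countable :=
      (hN0.insert ∅).mono fun A hA => hA.1
    obtain ⟨A, hA⟩ := hcount.exists_eq_range ⟨∅, mem_insert _ _, empty_subset _⟩
    have hA' : ∀ n, A n ∈ insert ∅ N0 ∧ A n ⊆ U p := fun n => by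
      have : A n ∈ {A | A ∈ insert ∅ N0 ∧ A ⊆ U p} := hA ▸ mem_range_self n
      exact this
    let M : ℕ → Set (ZeroAtInftyContinuousMap X ℝ) := fun n =>
      {g | ‖g‖ ≤ 1 ∧ w g ∉ ⋃₀ (A '' Iio n)}
    have hM : ∀ n, PC (M n) := by
      intro n
      by_contra hPC
      unfold PC at hPC
      push Not at hPC
      obtain ⟨D, hD, δ, hδ, hall⟩ := hPC
      refine hcon ⟨A '' Iio n, ?_, (finite_Iio n).image A, ?_, D, hD, δ, hδ, ?_⟩
      · rintro _ ⟨i, _, rfl⟩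
        exact (hA' i).1
      · rintro x ⟨_, ⟨i, _, rfl⟩, hx⟩
        exact (hA' i).2 hx
      · intro g hg hgD
        by_contra hnot
        obtain ⟨x, hx, hx2⟩ := hall g ⟨hg, hnot⟩
        exact absurd (hgD x hx) (not_lt.2 hx2)
    obtain ⟨g, hg, hgx⟩ := exists_null_seq H M hM
    have hlim : Tendsto (fun n => w (g n)) atTop (𝓝 0) := by
      rw [tendsto_weak]
      intro φ
      have := pointwise_null g (fun n => (hg n).1) (H g) hgx φ
      simpa [w] using this
    obtain ⟨F, hF1, hF2, hF3, hF4⟩ := hN _ hlim (U p) (isOpen_eval p _) (hU0 p)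
    have hFA : ∀ B ∈ F, ∃ i, A i = B := by
      intro B hB
      have : B ∈ {A | A ∈ insert ∅ N0 ∧ A ⊆ U p} :=
        ⟨mem_insert_of_mem _ (hF1 hB), (subset_sUnion_of_mem hB).trans hF3⟩
      rw [hA] at this
      exact this
    have hbig : ∀ᶠ n in atTop, ∀ B ∈ F, B ∈ A '' Iio n := by
      rw [eventually_all_finite hF2]
      intro B hB
      obtain ⟨i, rfl⟩ := hFA B hB
      filter_upwards [eventually_gt_atTop i] with n hn
      exact ⟨i, hn, rfl⟩
    obtain ⟨n, hn1, B, hB, hn2⟩ := (hbig.and hF4).exists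
    exact (hg n).2 ⟨B, hn1 B hB, hn2⟩
  choose F hF1 hF2 hF3 D hD δ hδ hF4 using claim
  have hfib : ∀ p q, F p = F q → p ∈ D q := by
    intro p q hpq
    by_contra hp
    obtain ⟨f, hf1, hf2, hf3, hf4⟩ := exists_continuous_one_zero_of_isCompact
      (isCompact_singleton (x := p)) (hD q).isClosed (disjoint_singleton_left.2 hp)
    let g := ofCpt f f.continuous hf3
    have h1 : w g ∈ ⋃₀ F q := by
      refine hF4 q g ?_ ?_
      · rw [norm_le_iff _ zero_le_one]
        intro x
        exact abs_le.2 ⟨by linarith [(hf4 x).1, show g x = f x from rfl], (hf4 x).2⟩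
      · intro x hx
        have : g x = 0 := hf2 hx
        rw [this, abs_zero]
        exact hδ q
    rw [← hpq] at h1
    have h2 : |w.symm (w g) p| < 1 / 2 := hF3 p h1
    have h3 : g p = 1 := hf1 rfl
    rw [LinearEquiv.symm_apply_apply, h3] at h2
    norm_num at h2
  rw [← countable_univ_iff]
  have hcnt := countable_ofPred_finite_subset (hN0.insert ∅)
  have hsub : (univ : Set X) ⊆ ⋃ T ∈ range F, {p | F p = T} := by
    intro p _
    exact mem_biUnion (mem_range_self p) rfl
  refine Countable.mono hsub (Countable.biUnion (hcnt.mono ?_) ?_)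
  · rintro _ ⟨p, rfl⟩
    exact ⟨hF2 p, hF1 p⟩
  · rintro _ ⟨q, rfl⟩
    exact ((hD q).subset fun p hp => hfib p q hp).countable

end

section
variable {X : Type} [TopologicalSpace X] [T2Space X] [LocallyCompactSpace X]

theorem exists_gauge : ∃ d : (ℕ → ℝ) → (ℕ → ℝ) → ℝ, (∀ y, Continuous (fun z => d z y)) ∧
    (∀ z y, 0 ≤ d z y) ∧ ∀ z y, d z y = 0 ↔ z = y := by
  letI := TopologicalSpace.metrizableSpaceMetric (ℕ → ℝ)
  exact ⟨fun z y => dist z y, fun y => continuous_id.dist continuous_const,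
    fun _ _ => dist_nonneg, fun _ _ => dist_eq_zero⟩

/-- the bump profile -/
noncomputable def bb (n : ℕ) (t : ℝ) : ℝ := min 1 (2 ^ (n + 1) * t) - min 1 (2 ^ n * t / 2)

theorem bb_cont (n : ℕ) : Continuous (bb n) := by unfold bb; fun_prop

theorem bb_nonneg (n : ℕ) {t : ℝ} (ht : 0 ≤ t) : 0 ≤ bb n t := by
  unfold bb
  have h : (0 : ℝ) ≤ 2 ^ n * t := by positivity
  have : min 1 (2 ^ n * t / 2) ≤ min 1 (2 ^ (n + 1) * t) := by
    refine min_le_min_left _ ?_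
    rw [pow_succ]
    nlinarith
  linarith

theorem bb_sum (k : ℕ) {t : ℝ} (ht : 0 ≤ t) (N : ℕ) :
    ∑ n ∈ Finset.range N, bb (n + k) t ≤ 2 := by
  have key : ∑ n ∈ Finset.range N, bb (n + k) t
      ≤ min 1 (2 ^ (N + k) * t) + min 1 (2 ^ (N + k) * t / 2) := by
    induction N with
    | zero =>
      rw [Finset.range_zero, Finset.sum_empty]
      have : (0 : ℝ) ≤ 2 ^ (0 + k) * t := by positivity
      exact add_nonneg (le_min zero_le_one this) (le_min zero_le_one (by linarith))
    | succ N ih =>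
      rw [Finset.sum_range_succ]
      have e : (2 : ℝ) ^ (N + 1 + k) * t / 2 = 2 ^ (N + k) * t := by ring
      have e2 : N + 1 + k = N + k + 1 := by ring
      rw [e]
      unfold bb at *
      rw [e2]
      linarith
  have h1 := min_le_left (1 : ℝ) (2 ^ (N + k) * t)
  have h2 := min_le_left (1 : ℝ) (2 ^ (N + k) * t / 2)
  linarith

theorem bb_zero (n : ℕ) {t : ℝ} (ht : 1 ≤ 2 ^ n * t / 2) : bb n t = 0 := by
  unfold bb
  rw [min_eq_left ht, min_eq_left, sub_self]
  rw [pow_succ]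
  linarith

theorem bb_half (n : ℕ) {t : ℝ} (h1 : (1 / 2) ^ (n + 1) < t) (h2 : t ≤ (1 / 2) ^ n) :
    1 / 2 ≤ bb n t := by
  unfold bb
  have e : ∀ m : ℕ, (2 : ℝ) ^ m * (1 / 2) ^ m = 1 := fun m => by rw [← mul_pow]; norm_num
  have p : ∀ m : ℕ, (0 : ℝ) < 2 ^ m := fun m => by positivity
  have a1 : 1 ≤ 2 ^ (n + 1) * t := by
    rw [← e (n + 1)]
    exact mul_le_mul_of_nonneg_left h1.le (p _).le
  have a2 : 2 ^ n * t ≤ 1 := by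
    rw [← e n]
    exact mul_le_mul_of_nonneg_left h2 (p _).le
  rw [min_eq_left a1]
  have := min_le_right (1 : ℝ) (2 ^ n * t / 2)
  linarith

theorem null_of_sum (G : ℕ → ZeroAtInftyContinuousMap X ℝ) (hG0 : ∀ n x, 0 ≤ G n x)
    (hG : ∀ N x, ∑ n ∈ Finset.range N, G n x ≤ 2)
    (φ : StrongDual ℝ (ZeroAtInftyContinuousMap X ℝ)) :
    Tendsto (fun n => φ (G n)) atTop (𝓝 0) := by
  have hs : Summable (fun n => |φ (G n)|) := by
    refine summable_of_sum_range_le (c := ‖φ‖ * 2) (fun n => abs_nonneg _) fun N => ?_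
    let s : ℕ → ℝ := fun n => if 0 ≤ φ (G n) then 1 else -1
    have hs1 : ∀ n, |s n| ≤ 1 := fun n => by
      simp only [s]; split_ifs <;> simp
    have hs2 : ∀ n, s n * φ (G n) = |φ (G n)| := fun n => by
      simp only [s]; split_ifs with h
      · rw [one_mul, abs_of_nonneg h]
      · rw [neg_one_mul, abs_of_neg (not_le.1 h)]
    have : ∑ n ∈ Finset.range N, |φ (G n)| = φ (∑ n ∈ Finset.range N, s n • G n) := by
      rw [map_sum]
      refine Finset.sum_congr rfl fun n _ => ?_
      rw [map_smul, smul_eq_mul, hs2]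
    rw [this]
    refine (le_abs_self _).trans (φ.le_opNorm_of_le ?_)
    rw [norm_le_iff _ zero_le_two]
    intro x
    have e : (∑ n ∈ Finset.range N, s n • G n) x = ∑ n ∈ Finset.range N, s n * G n x :=
      map_sum (evalCLM x) (fun n => s n • G n) (Finset.range N)
    rw [e]
    refine (Finset.abs_sum_le_sum_abs _ _).trans (le_trans (Finset.sum_le_sum ?_) (hG N x))
    intro n _
    rw [abs_mul, abs_of_nonneg (hG0 n x)]
    exact mul_le_of_le_one_left (hG0 n x) (hs1 n)
  exact (tendsto_zero_iff_abs_tendsto_zero _).2 hs.tendsto_atTop_zero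

theorem bumps (g : ℕ → ZeroAtInftyContinuousMap X ℝ) (y : ℕ → ℝ) (hy : y ≠ 0) :
    ∃ G : ℕ → ZeroAtInftyContinuousMap X ℝ,
      (∀ φ : StrongDual ℝ (ZeroAtInftyContinuousMap X ℝ), Tendsto (fun n => φ (G n)) atTop (𝓝 0)) ∧
      ∀ K : ℕ, ∃ O : Set (ℕ → ℝ), IsOpen O ∧ y ∈ O ∧
        ∀ x, (fun n => g n x) ∈ O → (fun n => g n x) ≠ y → ∃ n ≥ K, 1 / 2 ≤ G n x := by
  obtain ⟨d, hd1, hd2, hd3⟩ := exists_gauge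
  let h : X → ℕ → ℝ := fun x n => g n x
  have hcont : Continuous h := continuous_pi fun n => map_continuous (g n)
  have hinf : Tendsto h (cocompact X) (𝓝 0) := tendsto_pi_nhds.2 fun n => zero_at_infty (g n)
  have ht0 : 0 < d 0 y := lt_of_le_of_ne (hd2 _ _) fun e => hy ((hd3 _ _).1 e.symm).symm
  have hdc : Tendsto (fun x => d (h x) y) (cocompact X) (𝓝 (d 0 y)) :=
    ((hd1 y).tendsto 0).comp hinf
  obtain ⟨k, hk⟩ := pow_unbounded_of_one_lt (2 / d 0 y) (one_lt_two : (1 : ℝ) < 2)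
  have hk' : 2 < 2 ^ k * d 0 y := by rwa [div_lt_iff₀ ht0] at hk
  have hkn : ∀ n, 2 < 2 ^ (n + k) * d 0 y := by
    intro n
    have h1 : (1 : ℝ) ≤ 2 ^ n := one_le_pow₀ one_le_two
    rw [pow_add, mul_assoc]
    nlinarith
  let G : ℕ → ZeroAtInftyContinuousMap X ℝ := fun n =>
    { toFun := fun x => bb (n + k) (d (h x) y)
      continuous_toFun := (bb_cont _).comp ((hd1 y).comp hcont)
      zero_at_infty' := by
        refine Tendsto.congr' ?_ (tendsto_const_nhds (x := (0 : ℝ)))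
        have h1 := (hdc.const_mul (2 ^ (n + k))).eventually (lt_mem_nhds (hkn n))
        filter_upwards [h1] with x hx
        exact (bb_zero _ (by linarith)).symm }
  refine ⟨G, ?_, ?_⟩
  · refine null_of_sum G (fun n x => bb_nonneg _ (hd2 _ _)) (fun N x => bb_sum k (hd2 _ _) N)
  · intro K
    refine ⟨{z | d z y < (1 / 2) ^ (K + k + 1)}, isOpen_lt (hd1 y) continuous_const, ?_, ?_⟩
    · change d y y < _
      rw [(hd3 y y).2 rfl]
      positivity
    · intro x hx hne
      have hx' : d (h x) y < (1 / 2) ^ (K + k + 1) := hx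
      have hpos : 0 < d (h x) y := lt_of_le_of_ne (hd2 _ _) fun e => hne ((hd3 _ _).1 e.symm)
      have hle : d (h x) y ≤ 1 := hx'.le.trans (pow_le_one₀ (by norm_num) (by norm_num))
      obtain ⟨m, hm1, hm2⟩ := exists_nat_pow_near_of_lt_one hpos hle
        (by norm_num : (0 : ℝ) < 1 / 2) (by norm_num)
      have hlt : K + k + 1 < m + 1 := by
        have := hm1.trans hx'
        exact (pow_lt_pow_iff_right_of_lt_one₀ (by norm_num) (by norm_num)).1 this
      refine ⟨m - k, by omega, ?_⟩
      change 1 / 2 ≤ bb (m - k + k) (d (h x) y)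
      rw [Nat.sub_add_cancel (by omega)]
      exact bb_half m hm1 hm2

theorem case_one {N : Set (Set (WeakSpace ℝ (ZeroAtInftyContinuousMap X ℝ)))}
    (hσ : IsSigmaLocallyFinite N) (hk : IsKNetwork N)
    (g : ℕ → ZeroAtInftyContinuousMap X ℝ) : (range (fun x n => g n x)).Countable := by
  obtain ⟨N0, hN0, hN⟩ := exists_network_at hσ hk 0
  let w := toWeakSpace ℝ (ZeroAtInftyContinuousMap X ℝ)
  let h : X → ℕ → ℝ := fun x n => g n x
  let Y := {y : ℕ → ℝ // y ∈ range h ∧ y ≠ 0}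
  suffices hY : Countable Y by
    have : range h ⊆ insert 0 (range (Subtype.val : Y → ℕ → ℝ)) := by
      intro y hy
      by_cases h0 : y = 0
      · exact Or.inl h0
      · exact Or.inr ⟨⟨y, hy, h0⟩, rfl⟩
    exact ((countable_range _).insert 0).mono this
  have hp : ∀ y : Y, ∃ p, h p = y.1 := fun y => y.2.1
  choose p hp using hp
  choose G hG1 hG2 using fun y : Y => bumps g y.1 y.2.2
  have hlim : ∀ y, Tendsto (fun n => w (G y n)) atTop (𝓝 0) := by
    intro y
    rw [tendsto_weak]
    intro φ
    simpa [w] using hG1 y φ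
  have hF := fun y => hN _ (hlim y) _ (isOpen_eval (p y) (1 / 2)) (by
    change |w.symm 0 (p y)| < 1 / 2
    rw [map_zero]
    simp)
  choose F hF1 hF2 hF3 hF4 using hF
  choose K hK using fun y => eventually_atTop.1 (hF4 y)
  choose O hO1 hO2 hO3 using fun y => hG2 y (K y)
  have hB := fun y => (isBasis_countableBasis (ℕ → ℝ)).exists_subset_of_mem_open (hO2 y) (hO1 y)
  choose B hB1 hB2 hB3 using hB
  have hcnt := countable_ofPred_finite_subset hN0
  have hcc : ({t : Set (Set (WeakSpace ℝ (ZeroAtInftyContinuousMap X ℝ))) | t.Finite ∧ t ⊆ N0} ×ˢ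
    (countableBasis (ℕ → ℝ))).Countable := hcnt.prod (countable_countableBasis _)
  rw [← countable_univ_iff]
  refine MapsTo.countable_of_injOn (f := fun y => (F y, B y)) ?_ ?_ hcc
  · intro y _
    exact ⟨⟨hF2 y, hF1 y⟩, hB1 y⟩
  · intro y _ z _ hyz
    have e1 : F y = F z := congrArg Prod.fst hyz
    have e2 : B y = B z := congrArg Prod.snd hyz
    by_contra hne
    have hz : h (p z) ∈ O y := by
      rw [hp z]
      exact hB3 y (e2 ▸ hB2 z)
    obtain ⟨n, hn, hn2⟩ := hO3 y (p z) hz (by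
      intro e
      exact hne (Subtype.ext (e.symm.trans (hp z))))
    have h1 := hK y n hn
    rw [e1] at h1
    have h2 : |w.symm (w (G y n)) (p z)| < 1 / 2 := hF3 z h1
    rw [LinearEquiv.symm_apply_apply] at h2
    linarith [le_abs_self (G y n (p z))]

theorem weak_compact_bounded {E : Type} [NormedAddCommGroup E] [NormedSpace ℝ E]
    {K : Set (WeakSpace ℝ E)} (hK : IsCompact K) :
    ∃ n : ℕ, ∀ f ∈ K, ‖(toWeakSpace ℝ E).symm f‖ ≤ n := by
  obtain ⟨C, hC⟩ := banach_steinhaus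
    (g := fun f : K => NormedSpace.inclusionInDoubleDual ℝ E ((toWeakSpace ℝ E).symm f.1)) (by
      intro φ
      obtain ⟨C, hC⟩ := (hK.image (continuous_weak φ)).isBounded.exists_norm_le
      refine ⟨C, fun f => ?_⟩
      rw [NormedSpace.dual_def]
      exact hC _ ⟨f.1, f.2, rfl⟩)
  obtain ⟨n, hn⟩ := exists_nat_ge C
  refine ⟨n, fun f hf => ?_⟩
  rw [← (NormedSpace.inclusionInDoubleDualLi (E := E) ℝ).norm_map]
  exact (hC ⟨f, hf⟩).trans hn

theorem local_pointwise [Countable X] (n : ℕ)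
    (U : Set (WeakSpace ℝ (ZeroAtInftyContinuousMap X ℝ))) (hU : IsOpen U)
    (g : WeakSpace ℝ (ZeroAtInftyContinuousMap X ℝ)) (hg : g ∈ U)
    (hgn : ‖(toWeakSpace ℝ (ZeroAtInftyContinuousMap X ℝ)).symm g‖ ≤ n) :
    ∃ O ∈ countableBasis (X → ℝ), ⇑((toWeakSpace ℝ (ZeroAtInftyContinuousMap X ℝ)).symm g) ∈ O ∧
      ∀ f, ‖(toWeakSpace ℝ (ZeroAtInftyContinuousMap X ℝ)).symm f‖ ≤ n →
        ⇑((toWeakSpace ℝ (ZeroAtInftyContinuousMap X ℝ)).symm f) ∈ O → f ∈ U := by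
  let w := toWeakSpace ℝ (ZeroAtInftyContinuousMap X ℝ)
  let c : WeakSpace ℝ (ZeroAtInftyContinuousMap X ℝ) → X → ℝ := fun f => ⇑(w.symm f)
  have ht : Tendsto id (comap c (𝓝 (c g)) ⊓ 𝓟 {f | ‖w.symm f‖ ≤ n}) (𝓝 g) := by
    rw [tendsto_weak]
    intro φ
    rw [Metric.tendsto_nhds]
    intro ε hε
    set C : ℝ := 2 * n + 1 with hC
    have hCpos : 0 < C := by positivity
    have hφ : 0 < ‖φ‖ + 1 := by positivity
    obtain ⟨I, hI⟩ := key φ (fun x : X => ({x} : Set X)) (fun x => isCompact_singleton)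
      (fun x y hxy => disjoint_singleton.2 hxy) (ε := ε / (4 * C)) (by positivity)
    set δ := ε / (4 * C * (‖φ‖ + 1)) with hδ
    have hδ0 : 0 < δ := by positivity
    have hev : ∀ᶠ f in comap c (𝓝 (c g)), ∀ x ∈ I, |c f x - c g x| < δ := by
      refine (?_ : ∀ᶠ u in 𝓝 (c g), ∀ x ∈ I, |u x - c g x| < δ).comap c
      rw [Filter.eventually_all_finset]
      intro x _
      exact (continuous_apply x).continuousAt.eventually (Metric.ball_mem_nhds (c g x) hδ0)
    rw [eventually_inf_principal]
    filter_upwards [hev] with f hf hfn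
    have hfn' : ‖w.symm f‖ ≤ n := hfn
    have hgn' : ‖w.symm g‖ ≤ n := hgn
    have hb := hI (C⁻¹ • (w.symm f - w.symm g)) (by
      rw [norm_smul, norm_inv, Real.norm_of_nonneg hCpos.le, inv_mul_le_iff₀ hCpos]
      have := norm_sub_le (w.symm f) (w.symm g)
      linarith) δ hδ0 (by
      intro x hx
      refine ⟨x, fun hxI => ?_, rfl⟩
      have h1 := hf x hxI
      have h2 : (C⁻¹ • (w.symm f - w.symm g)) x = C⁻¹ * (c f x - c g x) := rfl
      rw [h2, abs_mul, abs_of_pos (inv_pos.2 hCpos)] at hx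
      have h3 : C⁻¹ ≤ 1 := inv_le_one_of_one_le₀ (by
        have : (0 : ℝ) ≤ n := Nat.cast_nonneg n
        linarith)
      have h4 := mul_le_of_le_one_left (abs_nonneg (c f x - c g x)) h3
      linarith)
    rw [map_smul, smul_eq_mul, abs_mul, abs_of_pos (inv_pos.2 hCpos), inv_mul_le_iff₀ hCpos,
      map_sub] at hb
    have e1 : C * (ε / (4 * C)) = ε / 4 := by field_simp
    have e2 : C * (δ * (‖φ‖ + 1)) = ε / 4 := by rw [hδ]; field_simp
    have e3 : 0 < C * δ := by positivity
    rw [Real.dist_eq]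
    change |φ (w.symm f) - φ (w.symm g)| < ε
    nlinarith
  have hmem := ht (hU.mem_nhds hg)
  rw [mem_map, mem_inf_principal, mem_comap] at hmem
  obtain ⟨V, hV, hV2⟩ := hmem
  obtain ⟨O, hO, hgO, hOV⟩ := (isBasis_countableBasis (X → ℝ)).mem_nhds_iff.1 hV
  exact ⟨O, hO, hgO, fun f hf hfO => hV2 (show c f ∈ V from hOV hfO) hf⟩

theorem reverse [Countable X] : IsAlephSpace (WeakSpace ℝ (ZeroAtInftyContinuousMap X ℝ)) := by
  refine ⟨inferInstance, t2_weak, ?_⟩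
  let w := toWeakSpace ℝ (ZeroAtInftyContinuousMap X ℝ)
  let A : ℕ → Set (X → ℝ) → Set (WeakSpace ℝ (ZeroAtInftyContinuousMap X ℝ)) := fun n O =>
    {f | ‖w.symm f‖ ≤ n ∧ ⇑(w.symm f) ∈ O}
  let N := ⋃ n, A n '' (countableBasis (X → ℝ))
  have hN : N.Countable := countable_iUnion fun n => (countable_countableBasis _).image _
  refine ⟨N, ?_, ?_⟩
  · rcases N.eq_empty_or_nonempty with h | h
    · refine ⟨fun _ => ∅, fun _ x => ⟨univ, univ_mem, ?_⟩, by simpa using h⟩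
      simp
    · obtain ⟨e, he⟩ := hN.exists_eq_range h
      refine ⟨fun n => {e n}, fun n x => ⟨univ, univ_mem, ?_⟩, ?_⟩
      · exact (finite_singleton (e n)).subset fun B hB => hB.1
      · rw [he]
        ext B
        simp [eq_comm]
  · intro K U hK hU hKU
    obtain ⟨n, hn⟩ := weak_compact_bounded hK
    have hloc := fun g : K => local_pointwise n U hU g.1 (hKU g.2) (hn g.1 g.2)
    choose O hO1 hO2 hO3 using hloc
    have hc : Continuous (fun f : WeakSpace ℝ (ZeroAtInftyContinuousMap X ℝ) => ⇑(w.symm f)) :=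
      continuous_pi fun x => continuous_weak (evalCLM x)
    obtain ⟨t, ht⟩ := hK.elim_finite_subcover
      (fun g : K => (fun f : WeakSpace ℝ (ZeroAtInftyContinuousMap X ℝ) => ⇑(w.symm f)) ⁻¹' (O g))
      (fun g => ((isBasis_countableBasis (X → ℝ)).isOpen (hO1 g)).preimage hc)
      (fun g hg => mem_iUnion.2 ⟨⟨g, hg⟩, hO2 ⟨g, hg⟩⟩)
    refine ⟨(fun g => A n (O g)) '' t, ?_, t.finite_toSet.image _, ?_, ?_⟩
    · rintro _ ⟨g, _, rfl⟩
      exact mem_iUnion.2 ⟨n, O g, hO1 g, rfl⟩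
    · intro f hf
      have := ht hf
      simp only [mem_iUnion] at this
      obtain ⟨g, hg, hfg⟩ := this
      exact ⟨A n (O g), ⟨g, hg, rfl⟩, hn f hf, hfg⟩
    · rintro f ⟨_, ⟨g, _, rfl⟩, hf⟩
      exact hO3 g f hf.1 hf.2

end

end CZeroAux

/-- For a locally compact Hausdorff space `X`, the Banach space `C₀(X)` of continuous
functions vanishing at infinity, with its weak topology, is an ℵ-space iff `X` is countable. -/
theorem czero_weakAleph_iff_countable
    (X : Type) [TopologicalSpace X] [T2Space X] [LocallyCompactSpace X] :
    IsAlephSpace (WeakSpace ℝ (ZeroAtInftyContinuousMap X ℝ)) ↔ Countable X := by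
  constructor
  · rintro ⟨-, -, N, hσ, hk⟩
    exact CZeroAux.case_two hσ hk (CZeroAux.case_one hσ hk)
  · intro h
    exact CZeroAux.reverse
end

section
/- Let X be a countable regular Hausdorff space that is an ℵ₀-space (i.e., X has a countable k-network). Then C_c(X) endowed with its weak topology σ(E,E′) is an ℵ₀-space. In particular, C_c(X) is a weakly ℵ₀-space for every countable metrizable space X. -/
open TopologicalSpace Filter Set

section Helpers

variable {X : Type} [TopologicalSpace X]

/-- soft threshold -/
noncomputable def softT (d : ℝ) (g : C(X, ℝ)) : C(X, ℝ) :=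
  ⟨fun x => g x - max (min (g x) d) (-d), by fun_prop⟩

lemma softT_abs_le (d : ℝ) (hd : 0 ≤ d) (g : C(X, ℝ)) (x : X) : |softT d g x| ≤ |g x| := by
  simp only [softT, ContinuousMap.coe_mk]
  grind

lemma softT_zero (d : ℝ) (g : C(X, ℝ)) (x : X) (h : |g x| ≤ d) : softT d g x = 0 := by
  simp only [softT, ContinuousMap.coe_mk]
  grind

lemma softT_sub (d : ℝ) (hd : 0 ≤ d) (g : C(X, ℝ)) (x : X) : |(g - softT d g) x| ≤ d := by
  simp only [softT, ContinuousMap.coe_mk, ContinuousMap.sub_apply]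
  grind

/-- Near each point, the functional has small mass off the point. -/
lemma exists_small_nhd (φ : C(X, ℝ) →ₗ[ℝ] ℝ) (C : Set X) (K : ℝ) (hK0 : 0 < K)
    (hK : ∀ r > 0, ∀ g : C(X, ℝ), (∀ x ∈ C, |g x| ≤ r) → |φ g| ≤ K * r)
    (x : X) (ε : ℝ) (hε : 0 < ε) :
    ∃ V : Set X, IsOpen V ∧ x ∈ V ∧ ∀ h : C(X, ℝ), h x = 0 → (∀ y ∉ V, h y = 0) →
      (∀ y ∈ C, |h y| ≤ 1) → |φ h| ≤ ε := by
  by_contra hcon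
  push Not at hcon
  have hcon' : ∀ V : Set X, IsOpen V → x ∈ V → ∃ h : C(X, ℝ), h x = 0 ∧ (∀ y ∉ V, h y = 0) ∧
      (∀ y ∈ C, |h y| ≤ 1) ∧ ε < φ h := by
    intro V hV hx
    obtain ⟨h, h1, h2, h3, h4⟩ := hcon V hV hx
    rcases lt_abs.1 h4 with h5 | h5
    · exact ⟨h, h1, h2, h3, h5⟩
    · refine ⟨-h, by simp [h1], fun y hy => by simp [h2 y hy], fun y hy => by simpa using h3 y hy, by simpa using h5⟩
  have key : ∀ n : ℕ, ∃ h : C(X, ℝ), ∃ W : Set X, IsOpen W ∧ x ∈ W ∧ (∀ y ∈ W, h y = 0) ∧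
      (∀ y ∈ C, |h y| ≤ 1) ∧ n * (ε / 2) ≤ φ h := by
    intro n
    induction n with
    | zero => exact ⟨0, univ, isOpen_univ, mem_univ _, by simp, by simp, by simp⟩
    | succ n ih =>
      obtain ⟨h, W, hW, hxW, h0, h1, h2⟩ := ih
      obtain ⟨k, k0, k1, k2, k3⟩ := hcon' W hW hxW
      have hd : 0 < ε / (2 * K) := by positivity
      set d := ε / (2 * K) with hdd
      have hφ : |φ (k - softT d k)| ≤ K * d :=
        hK d hd _ fun y _ => softT_sub d hd.le k y
      have hKd : K * d = ε / 2 := by rw [hdd]; field_simp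
      refine ⟨h + softT d k, W ∩ {y | |k y| < d}, hW.inter (isOpen_lt (by fun_prop) (by fun_prop)),
        ⟨hxW, by simpa [k0] using hd⟩, ?_, ?_, ?_⟩
      · rintro y ⟨hy, hy'⟩
        simp [h0 y hy, softT_zero d k y (le_of_lt hy')]
      · intro y hy
        by_cases hyW : y ∈ W
        · simpa [h0 y hyW] using (softT_abs_le d hd.le k y).trans (k2 y hy)
        · have : softT d k y = 0 := softT_zero d k y (by simpa [k1 y hyW] using hd.le)
          simpa [this] using h1 y hy
      · rw [map_sub, hKd] at hφ
        have := (abs_le.1 hφ).2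
        rw [map_add]; push_cast; linarith
  obtain ⟨n, hn⟩ := exists_nat_gt (K * 1 / (ε / 2))
  obtain ⟨h, W, -, -, -, h1, h2⟩ := key n
  have := (le_abs_self _).trans (hK 1 one_pos h h1)
  rw [div_lt_iff₀ (by positivity)] at hn
  linarith

lemma exists_finite_small [T2Space X] [NormalSpace X] [Countable X]
    (φ : C(X, ℝ) →ₗ[ℝ] ℝ) (C : Set X) (hC : IsCompact C) (K : ℝ) (hK0 : 0 < K)
    (hK : ∀ r > 0, ∀ g : C(X, ℝ), (∀ x ∈ C, |g x| ≤ r) → |φ g| ≤ K * r)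
    (ε : ℝ) (hε : 0 < ε) :
    ∃ F : Finset X, ∀ h : C(X, ℝ), (∀ y ∈ F, h y = 0) →
      (∀ y ∈ C, |h y| ≤ 1) → |φ h| ≤ ε := by
  obtain ⟨e, he0, he⟩ := (countable_univ (α := X)).exists_pos_forall_sum_le hε
  choose V hVo hxV hV using fun x => exists_small_nhd φ C K hK0 hK x (e x) (he0 x)
  obtain ⟨t, ht⟩ := hC.elim_finite_subcover V hVo (fun x _ => mem_iUnion.2 ⟨x, hxV x⟩)
  refine ⟨t, fun h h0 h1 => ?_⟩
  obtain ⟨p, hp⟩ := PartitionOfUnity.exists_isSubordinate_of_locallyFinite hC.isClosed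
    (fun i : t => V i) (fun i => hVo i) (locallyFinite_of_finite _)
    (by simpa [iUnion_subtype] using ht)
  have hz : φ (h - ∑ i, p i * h) = 0 := by
    have : ∀ r > 0, |φ (h - ∑ i, p i * h)| ≤ K * r := fun r hr => hK r hr _ fun x hx => by
      have := p.sum_eq_one hx
      rw [finsum_eq_sum_of_fintype] at this
      rw [ContinuousMap.sub_apply, ContinuousMap.sum_apply]
      simp only [ContinuousMap.mul_apply]
      rw [← Finset.sum_mul, this]
      simp [hr.le]
    refine abs_nonpos_iff.1 (le_of_forall_pos_le_add fun r hr => ?_)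
    have := this (r / K) (by positivity)
    rwa [mul_div_cancel₀ _ hK0.ne', ← zero_add r] at this
  rw [map_sub, sub_eq_zero, map_sum] at hz
  rw [hz]
  calc _ ≤ ∑ i, |φ (p i * h)| := Finset.abs_sum_le_sum_abs _ _
    _ ≤ ∑ i : t, e i := by
      refine Finset.sum_le_sum fun i _ => hV i _ ?_ ?_ ?_
      · simp [h0 i i.2]
      · intro y hy
        have : p i y = 0 := by
          by_contra hne
          exact hy (hp i (subset_tsupport _ hne))
        simp [this]
      · intro y hy
        rw [ContinuousMap.mul_apply, abs_mul, abs_of_nonneg (p.nonneg i y)]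
        exact mul_le_one₀ (p.le_one i y) (abs_nonneg _) (h1 y hy)
    _ = ∑ x ∈ t, e x := Finset.sum_coe_sort t e
    _ ≤ ε := he t (subset_univ _)

/-- Continuous functionals are bounded by a sup over a compact set. -/
lemma exists_compact_bound (φ : StrongDual ℝ C(X, ℝ)) :
    ∃ C : Set X, IsCompact C ∧ ∃ K : ℝ, 0 < K ∧
      ∀ r > 0, ∀ g : C(X, ℝ), (∀ x ∈ C, |g x| ≤ r) → |φ g| ≤ K * r := by
  have h1 : φ ⁻¹' Metric.ball 0 1 ∈ nhds (0 : C(X, ℝ)) :=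
    φ.continuous.continuousAt.preimage_mem_nhds (by simpa using Metric.ball_mem_nhds 0 one_pos)
  rw [(nhds_basis_uniformity' Metric.uniformity_basis_dist.compactConvergenceUniformity).mem_iff]
    at h1
  obtain ⟨⟨C, d⟩, ⟨hC, hd⟩, hsub⟩ := h1
  simp only at hC hd hsub
  refine ⟨C, hC, 2 / d, by positivity, fun r hr g hg => ?_⟩
  have : (d / (2 * r)) • g ∈ φ ⁻¹' Metric.ball 0 1 := by
    apply hsub
    intro x hx
    have := hg x hx
    simp only [mem_ofPred_eq, Real.dist_eq]
    simp only [ContinuousMap.zero_apply, ContinuousMap.smul_apply, smul_eq_mul, zero_sub, abs_neg,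
      abs_mul]
    rw [abs_of_pos (by positivity)]
    calc _ ≤ d / (2 * r) * r := by gcongr
      _ = d / 2 := by field_simp
      _ < d := by linarith
  simp only [mem_preimage, map_smul, smul_eq_mul, Metric.mem_ball, Real.dist_eq, sub_zero, abs_mul]
    at this
  rw [abs_of_pos (by positivity)] at this
  have h3 : |φ g| = (2 / d * r) * (d / (2 * r) * |φ g|) := by field_simp
  rw [h3]
  nlinarith [show 0 < 2 / d * r by positivity]

lemma functional_ptwise [T2Space X] [NormalSpace X] [Countable X] (φ : StrongDual ℝ C(X, ℝ)) :
    ∃ C : Set X, IsCompact C ∧ ∀ M > 0, ∀ ε > 0, ∃ F : Finset X, ∃ d > 0, ∀ g : C(X, ℝ),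
      (∀ x ∈ C, |g x| ≤ M) → (∀ x ∈ F, |g x| ≤ d) → |φ g| < ε := by
  obtain ⟨C, hC, K, hK0, hK⟩ := exists_compact_bound φ
  refine ⟨C, hC, fun M hM ε hε => ?_⟩
  obtain ⟨F, hF⟩ := exists_finite_small (φ : C(X, ℝ) →ₗ[ℝ] ℝ) C hC K hK0 hK (ε / (3 * M))
    (by positivity)
  have hd : 0 < ε / (3 * K) := by positivity
  set d := ε / (3 * K) with hdd
  refine ⟨F, d, hd, fun g hg hgF => ?_⟩
  have h1 : |φ (g - softT d g)| ≤ K * d := hK d hd _ fun x _ => softT_sub d hd.le g x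
  have h2 := hF (M⁻¹ • softT d g) (fun y hy => by simp [softT_zero d g y (hgF y hy)])
    (fun y hy => by
      have := (softT_abs_le d hd.le g y).trans (hg y hy)
      simp only [ContinuousMap.smul_apply, smul_eq_mul, abs_mul, abs_inv, abs_of_pos hM]
      rw [inv_mul_le_iff₀ hM]; simpa using this)
  simp only [ContinuousLinearMap.coe_coe, map_smul, smul_eq_mul, abs_mul, abs_inv, abs_of_pos hM]
    at h2
  rw [inv_mul_le_iff₀ hM] at h2
  have h3 : M * (ε / (3 * M)) = ε / 3 := by field_simp
  have h4 : K * d = ε / 3 := by rw [hdd]; field_simp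
  rw [map_sub] at h1
  have := abs_add_le (φ g - φ (softT d g)) (φ (softT d g))
  rw [sub_add_cancel] at this
  linarith

lemma weak_eval_continuous (φ : StrongDual ℝ C(X, ℝ)) :
    Continuous (fun f : WeakSpace ℝ C(X, ℝ) => φ ((toWeakSpace ℝ C(X, ℝ)).symm f)) :=
  WeakBilin.eval_continuous (topDualPairing ℝ C(X, ℝ)).flip φ

lemma weak_nhds (U : Set (WeakSpace ℝ C(X, ℝ))) (hU : IsOpen U) (f : WeakSpace ℝ C(X, ℝ))
    (hf : f ∈ U) : ∃ s : Finset (StrongDual ℝ C(X, ℝ)), ∃ r > 0, ∀ g : WeakSpace ℝ C(X, ℝ),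
      (∀ φ ∈ s, |φ ((toWeakSpace ℝ C(X, ℝ)).symm g - (toWeakSpace ℝ C(X, ℝ)).symm f)| < r) →
        g ∈ U := by
  have h := ((LinearMap.weakBilin_withSeminorms (topDualPairing ℝ C(X, ℝ)).flip).mem_nhds_iff
    f U).1 (hU.mem_nhds hf)
  obtain ⟨s, r, hr, h⟩ := h
  refine ⟨s, r, hr, fun g hg => h ?_⟩
  refine (Seminorm.mem_ball _).2 ?_
  exact Seminorm.finset_sup_apply_lt hr fun φ hφ => hg φ hφ

/-- Weakly compact sets are uniformly bounded on compact sets. -/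
lemma weak_compact_bdd (Q : Set (WeakSpace ℝ C(X, ℝ))) (hQ : IsCompact Q) (C : Set X)
    (hC : IsCompact C) :
    ∃ M : ℝ, ∀ f ∈ Q, ∀ x ∈ C, |(toWeakSpace ℝ C(X, ℝ)).symm f x| ≤ M := by
  have : CompactSpace C := isCompact_iff_compactSpace.1 hC
  let R : C(X, ℝ) →L[ℝ] C(C, ℝ) :=
    { toFun := fun f => f.restrict C
      map_add' := fun _ _ => rfl
      map_smul' := fun _ _ => rfl
      cont := ContinuousMap.continuous_restrict C }
  let G : Q → (StrongDual ℝ C(C, ℝ) →L[ℝ] ℝ) := fun f =>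
    NormedSpace.inclusionInDoubleDual ℝ C(C, ℝ) (R ((toWeakSpace ℝ C(X, ℝ)).symm f))
  have hb : ∀ ψ : StrongDual ℝ C(C, ℝ), ∃ B, ∀ f : Q, ‖G f ψ‖ ≤ B := fun ψ => by
    obtain ⟨B, hB⟩ := (hQ.image (weak_eval_continuous (ψ ∘L R))).isBounded.exists_norm_le
    exact ⟨B, fun (f : Q) => hB (ψ (R ((toWeakSpace ℝ C(X, ℝ)).symm f.1))) ⟨f.1, f.2, rfl⟩⟩
  obtain ⟨M, hM⟩ := banach_steinhaus hb
  refine ⟨M, fun f hf x hx => ?_⟩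
  have h1 := hM ⟨f, hf⟩
  have h2 : ‖R ((toWeakSpace ℝ C(X, ℝ)).symm f)‖ ≤ M := by
    rw [← (NormedSpace.inclusionInDoubleDualLi (E := C(C, ℝ)) ℝ).norm_map]
    exact h1
  exact (ContinuousMap.norm_coe_le_norm (R ((toWeakSpace ℝ C(X, ℝ)).symm f)) ⟨x, hx⟩).trans h2

lemma compact_union_seq (C : Set X) (hC : IsCompact C) (x : ℕ → X)
    (hx : ∀ U, IsOpen U → C ⊆ U → ∃ k, ∀ n ≥ k, x n ∈ U) : IsCompact (C ∪ range x) := by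
  classical
  refine isCompact_of_finite_subcover fun {ι} V hVo hV => ?_
  obtain ⟨t, ht⟩ := hC.elim_finite_subcover V hVo (subset_union_left.trans hV)
  obtain ⟨k, hk⟩ := hx (⋃ i ∈ t, V i) (isOpen_biUnion fun i _ => hVo i) ht
  obtain ⟨t', ht'⟩ := ((finite_Iio k).image x).isCompact.elim_finite_subcover V hVo
    ((image_subset_range _ _).trans (subset_union_right.trans hV))
  refine ⟨t ∪ t', ?_⟩
  rw [Finset.set_biUnion_union]
  rintro y (hy | ⟨n, rfl⟩)
  · exact Or.inl (ht hy)
  · rcases lt_or_ge n k with h | h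
    · exact Or.inr (ht' ⟨n, h, rfl⟩)
    · exact Or.inl (hk n h)

/-- Finite unions of members of `N`. -/
def finUnions (N : Set (Set X)) : Set (Set X) := (fun F => ⋃₀ F) '' {F | F.Finite ∧ F ⊆ N}

/-- Finite intersections of members of `N`. -/
def finInters (N : Set (Set X)) : Set (Set X) := (fun F => ⋂₀ F) '' {F | F.Finite ∧ F ⊆ N}

lemma exists_bdd_member (N : Set (Set X)) (hN : N.Countable) (hk : IsKNetwork N)
    (Q : Set (WeakSpace ℝ C(X, ℝ))) (hQ : IsCompact Q) (C : Set X) (hC : IsCompact C) :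
    ∃ A ∈ finInters (finUnions N), C ⊆ A ∧ ∃ M : ℕ,
      ∀ f ∈ Q, ∀ x ∈ A, |(toWeakSpace ℝ C(X, ℝ)).symm f x| ≤ M := by
  have hcount : {A ∈ finUnions N | C ⊆ A}.Countable :=
    ((countable_ofPred_finite_subset hN).image _).mono (fun A hA => hA.1)
  have hmem : ∀ U, IsOpen U → C ⊆ U → ∃ A ∈ {A ∈ finUnions N | C ⊆ A}, A ⊆ U := by
    intro U hU hCU
    obtain ⟨F, h1, h2, h3, h4⟩ := hk C U hC hU hCU
    exact ⟨⋃₀ F, ⟨⟨F, ⟨h2, h1⟩, rfl⟩, h3⟩, h4⟩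
  obtain ⟨A0, hA0, -⟩ := hmem univ isOpen_univ (subset_univ _)
  obtain ⟨A, hA⟩ := hcount.exists_eq_range ⟨A0, hA0⟩
  have hAm : ∀ n, A n ∈ {A ∈ finUnions N | C ⊆ A} := fun n => hA ▸ mem_range_self n
  by_contra hcon
  push Not at hcon
  have : ∀ n : ℕ, ∃ f ∈ Q, ∃ x ∈ ⋂₀ (A '' Iic n), (n : ℝ) < |(toWeakSpace ℝ C(X, ℝ)).symm f x| :=
    fun n => hcon _ ⟨A '' Iic n, ⟨(finite_Iic n).image _, by
      rintro _ ⟨m, -, rfl⟩; exact (hAm m).1⟩, rfl⟩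
      (subset_sInter (by rintro _ ⟨m, -, rfl⟩; exact (hAm m).2)) n
  choose f hfQ x hx hfx using this
  have hcomp : IsCompact (C ∪ range x) := by
    refine compact_union_seq C hC x fun U hU hCU => ?_
    obtain ⟨B, hB, hBU⟩ := hmem U hU hCU
    rw [hA] at hB
    obtain ⟨k, rfl⟩ := hB
    exact ⟨k, fun n hn => hBU (hx n _ ⟨k, hn, rfl⟩)⟩
  obtain ⟨M, hM⟩ := weak_compact_bdd Q hQ _ hcomp
  obtain ⟨n, hn⟩ := exists_nat_gt M
  have := hM (f n) (hfQ n) (x n) (Or.inr (mem_range_self n))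
  linarith [hfx n]

lemma weak_coe_continuous : Continuous
    (fun f : WeakSpace ℝ C(X, ℝ) => ((toWeakSpace ℝ C(X, ℝ)).symm f : X → ℝ)) := by
  refine continuous_pi fun x => ?_
  exact weak_eval_continuous
    { toFun := fun f => f x
      map_add' := fun _ _ => rfl
      map_smul' := fun _ _ => rfl
      cont := continuous_eval_const x }

/-- The countable k-network of the weak topology. -/
def weakNet (N : Set (Set X)) (b : Set (Set (X → ℝ))) : Set (Set (WeakSpace ℝ C(X, ℝ))) :=
  (fun p : Set X × ℕ × Set (X → ℝ) =>
    {f | (∀ x ∈ p.1, |(toWeakSpace ℝ C(X, ℝ)).symm f x| ≤ p.2.1) ∧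
      ((toWeakSpace ℝ C(X, ℝ)).symm f : X → ℝ) ∈ p.2.2}) ''
    (finInters (finUnions N) ×ˢ (univ ×ˢ b))

lemma weak_ptwise_nhd [T2Space X] [NormalSpace X] [Countable X]
    (U : Set (WeakSpace ℝ C(X, ℝ))) (hU : IsOpen U)
    (f : WeakSpace ℝ C(X, ℝ)) (hf : f ∈ U) :
    ∃ C : Set X, IsCompact C ∧ ∀ M : ℕ,
      (∀ x ∈ C, |(toWeakSpace ℝ C(X, ℝ)).symm f x| ≤ M) →
      ∃ B : Set (X → ℝ), IsOpen B ∧ ((toWeakSpace ℝ C(X, ℝ)).symm f : X → ℝ) ∈ B ∧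
        ∀ g : WeakSpace ℝ C(X, ℝ), (∀ x ∈ C, |(toWeakSpace ℝ C(X, ℝ)).symm g x| ≤ M) →
          ((toWeakSpace ℝ C(X, ℝ)).symm g : X → ℝ) ∈ B → g ∈ U := by
  obtain ⟨s, r, hr, h⟩ := weak_nhds U hU f hf
  choose C hC hφ using functional_ptwise (X := X)
  refine ⟨⋃ φ ∈ s, C φ, s.isCompact_biUnion fun φ _ => hC φ, fun M hM => ?_⟩
  choose F d hd hF using fun φ => hφ φ (2 * M + 1) (by positivity) r hr
  refine ⟨⋂ φ ∈ s, ⋂ x ∈ F φ, {u | |u x - (toWeakSpace ℝ C(X, ℝ)).symm f x| < d φ},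
    isOpen_biInter_finset fun φ _ => isOpen_biInter_finset fun x _ =>
      isOpen_lt (by fun_prop) (by fun_prop), ?_, fun g hg hgB => h g fun φ hφs => hF φ _ ?_ ?_⟩
  · simp only [mem_iInter, mem_ofPred_eq, sub_self, abs_zero]
    exact fun φ _ _ _ => hd φ
  · intro x hx
    have hx' : x ∈ ⋃ φ ∈ s, C φ := mem_biUnion hφs hx
    have h1 := abs_sub ((toWeakSpace ℝ C(X, ℝ)).symm g x) ((toWeakSpace ℝ C(X, ℝ)).symm f x)
    rw [ContinuousMap.sub_apply]
    linarith [hM x hx', hg x hx']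
  · intro x hx
    simp only [mem_iInter, mem_ofPred_eq] at hgB
    exact (hgB φ hφs x hx).le

end Helpers


/-- If `X` is a countable regular Hausdorff ℵ₀-space, then `C_c(X)` endowed with its weak
topology is an ℵ₀-space. -/
theorem cc_weakAleph0_of_countable_aleph0_space
    (X : Type) [TopologicalSpace X] [T2Space X] [RegularSpace X] [Countable X]
    (hX : ∃ N : Set (Set X), N.Countable ∧ IsKNetwork N) :
    IsAleph0Space (WeakSpace ℝ C(X, ℝ)) := by
  have : LindelofSpace X := inferInstance
  have : NormalSpace X := inferInstance
  obtain ⟨N, hN, hk⟩ := hX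
  refine ⟨?_, ?_, weakNet N (countableBasis (X → ℝ)), ?_, ?_⟩
  · exact inferInstanceAs (RegularSpace (WeakBilin (topDualPairing ℝ C(X, ℝ)).flip))
  · refine T2Space.of_injective_continuous (f := fun f : WeakSpace ℝ C(X, ℝ) =>
      ((toWeakSpace ℝ C(X, ℝ)).symm f : X → ℝ)) ?_ weak_coe_continuous
    exact DFunLike.coe_injective.comp (toWeakSpace ℝ C(X, ℝ)).symm.injective
  · refine Set.Countable.image (Set.Countable.prod ?_ (countable_univ.prod
      (countable_countableBasis _))) _
    exact (countable_ofPred_finite_subset ((countable_ofPred_finite_subset hN).image _)).image _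
  · intro Q U hQ hU hQU
    have key : ∀ f ∈ Q, ∃ B ∈ countableBasis (X → ℝ), ∃ S ∈ weakNet N (countableBasis (X → ℝ)),
        ((toWeakSpace ℝ C(X, ℝ)).symm f : X → ℝ) ∈ B ∧ S ⊆ U ∧
        ∀ g ∈ Q, ((toWeakSpace ℝ C(X, ℝ)).symm g : X → ℝ) ∈ B → g ∈ S := by
      intro f hf
      obtain ⟨C, hC, h⟩ := weak_ptwise_nhd U hU f (hQU hf)
      obtain ⟨A, hA, hCA, M, hM⟩ := exists_bdd_member N hN hk Q hQ C hC
      obtain ⟨B, hB, hfB, hBU⟩ := h M fun x hx => hM f hf x (hCA hx)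
      obtain ⟨B', hB', hfB', hBB⟩ :=
        (isBasis_countableBasis (X → ℝ)).exists_subset_of_mem_open hfB hB
      refine ⟨B', hB', _, ⟨(A, M, B'), ⟨hA, mem_univ _, hB'⟩, rfl⟩, hfB', ?_, ?_⟩
      · rintro g ⟨hg1, hg2⟩
        exact hBU g (fun x hx => hg1 x (hCA hx)) (hBB hg2)
      · exact fun g hg hgB => ⟨fun x hx => hM g hg x hx, hgB⟩
    choose! B hB S hS hfB hSU hQS using key
    obtain ⟨t, htQ, ht⟩ := hQ.elim_nhds_subcover
      (fun f => (fun g : WeakSpace ℝ C(X, ℝ) =>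
        ((toWeakSpace ℝ C(X, ℝ)).symm g : X → ℝ)) ⁻¹' B f)
      (fun f hf => (((isBasis_countableBasis (X → ℝ)).isOpen (hB f hf)).preimage
        weak_coe_continuous).mem_nhds (hfB f hf))
    refine ⟨S '' t, ?_, t.finite_toSet.image _, ?_, ?_⟩
    · rintro _ ⟨f, hf, rfl⟩
      exact hS f (htQ f hf)
    · intro g hg
      obtain ⟨f, hf, hgf⟩ := mem_iUnion₂.1 (ht hg)
      exact ⟨S f, ⟨f, hf, rfl⟩, hQS f (htQ f hf) g hg hgf⟩
    · rintro g ⟨_, ⟨f, hf, rfl⟩, hg⟩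
      exact hSU f (htQ f hf) hg
end
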